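/- Let H be a fixed tree with vertex set {1,…,|H|}, let t be a fixed positive integer and c>0 a fixed constant, and let m:ℕ→ℕ satisfy cn ≤ m(n) ≤ (1+o(1))n as n→∞. Then the probability that P_{n,m(n)} has at least t components admitting an order-preserving isomorphism to H tends to 1 as n→∞. -/

import Mathlib

open SimpleGraph Filter Asymptotics

/-- `H` is a minor of `G`: to each vertex of `H` we can assign a connected nonempty
branch set in `G`, pairwise disjoint, with an edge of `G` between the branch sets of
any two adjacent vertices of `H`. -/
def IsMinor {α β : Type*} (H : SimpleGraph α) (G : SimpleGraph β) : Prop :=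
  ∃ f : α → Set β,
    (∀ a, (G.induce (f a)).Connected) ∧
    (∀ a b, a ≠ b → Disjoint (f a) (f b)) ∧
    (∀ a b, H.Adj a b → ∃ u ∈ f a, ∃ v ∈ f b, G.Adj u v)

/-- A graph is planar iff it has neither a `K₅`-minor nor a `K₃,₃`-minor
(Wagner's theorem). -/
def IsPlanar {V : Type*} (G : SimpleGraph V) : Prop :=
  ¬ IsMinor (completeGraph (Fin 5)) G ∧
    ¬ IsMinor (completeBipartiteGraph (Fin 3) (Fin 3)) G

/-- The number of edges of a graph. -/
noncomputable def edgeCount {V : Type*} (G : SimpleGraph V) : ℕ :=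
  G.edgeSet.ncard

/-- The degree of a vertex. -/
noncomputable def vertexDegree {V : Type*} (G : SimpleGraph V) (v : V) : ℕ :=
  (G.neighborSet v).ncard

/-- `𝒫(n,m)`: the set of labelled planar graphs on `{1,…,n}` with exactly `m` edges. -/
def planarSet (n m : ℕ) : Set (SimpleGraph (Fin n)) :=
  {G | IsPlanar G ∧ edgeCount G = m}

/-- The probability that the uniform random planar graph `P_{n,m}` satisfies `P`. -/
noncomputable def planarProb (n m : ℕ) (P : SimpleGraph (Fin n) → Prop) : ℝ :=
  ({G ∈ planarSet n m | P G}.ncard : ℝ) / ((planarSet n m).ncard : ℝ)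

/-- The number of pendant edges (edges incident to a vertex of degree 1). -/
noncomputable def pendantCount {V : Type*} (G : SimpleGraph V) : ℕ :=
  {e ∈ G.edgeSet | ∃ v ∈ e, vertexDegree G v = 1}.ncard

/-- The set of addable non-edges of `G`: non-edges whose addition keeps the graph planar. -/
def addableSet {V : Type*} (G : SimpleGraph V) : Set (Sym2 V) :=
  {e | ¬ e.IsDiag ∧ e ∉ G.edgeSet ∧ IsPlanar (G ⊔ SimpleGraph.fromEdgeSet {e})}

/-- `add(n,m)`: the minimum number of addable non-edges over all graphs in `𝒫(n,m)`. -/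
noncomputable def addMin (n m : ℕ) : ℕ :=
  sInf ((fun G => (addableSet G).ncard) '' planarSet n m)

/-- `W` carries an induced order-preserving copy of `H` in `G`: the increasing bijection
from `{1,…,h}` to `W` is an isomorphism between `H` and the induced subgraph `G[W]`. -/
def IsOrderCopy {h n : ℕ} (H : SimpleGraph (Fin h)) (G : SimpleGraph (Fin n))
    (W : Finset (Fin n)) : Prop :=
  ∃ hW : W.card = h,
    ∀ i j : Fin h,
      H.Adj i j ↔ G.Adj ((W.orderIsoOfFin hW i : Fin n)) ((W.orderIsoOfFin hW j : Fin n))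

/-- `W` is the vertex set of a connected component of `G`. -/
def IsComponent {V : Type*} (G : SimpleGraph V) (W : Finset V) : Prop :=
  (G.induce (W : Set V)).Connected ∧ ∀ v ∈ W, ∀ u, G.Adj v u → u ∈ W

/-- The number of components of `G` admitting an order-preserving isomorphism to `H`. -/
noncomputable def numOrderComponents {h n : ℕ} (H : SimpleGraph (Fin h))
    (G : SimpleGraph (Fin n)) : ℕ :=
  {W : Finset (Fin n) | IsComponent G W ∧ IsOrderCopy H G W}.ncard

/-- The number of distinct cycles (as subgraphs, identified with their edge sets) of
length at most `k` in `S`. -/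
noncomputable def cycleCountLe {V : Type*} (S : SimpleGraph V) (k : ℕ) : ℕ :=
  {E : Set (Sym2 V) | ∃ (v : V) (c : S.Walk v v),
    c.IsCycle ∧ c.length ≤ k ∧ {e | e ∈ c.edges} = E}.ncard

/-!
A planar graph with `n` vertices and at most `(1 + o(1)) n` edges has, for every fixed `k`, at least
`k n` addable edges once `n` is large: either it has many components, or it is close to a tree and
can be cut into few pieces, each attached to the rest at no more than two vertices, so that any two
vertices of one piece can be joined.

The theorem follows by switching. In a graph with fewer than `t` copies of `H`, isolate `h` vertices
one at a time: a constant proportion of the vertices have degree at most two, and such a vertex can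
be isolated after deleting one edge in all, by marking it, by cutting off a leaf, or by suppressing
a vertex of degree two. Since there are linearly many edges and vertices to choose from, each step
loses a constant factor in the count. Then plant `H` on the isolated vertices and restore the number
of edges by inserting an addable edge; the `k n` choices for it, against the linearly many edges
that can be removed to go back, bound the proportion of bad graphs by `O(1 / k)` for every `k`.
-/

namespace PlanarTreeComponents

/-! ### Connected vertex sets and minors -/

section Minor

variable {α V : Type*} {K : SimpleGraph α} {G G' : SimpleGraph V} {S A B : Set V} {a b : V}

lemma connected_induce_iff_forall_cut :
    (G.induce S).Connected ↔ S.Nonempty ∧ ∀ P : Set V, (S ∩ P).Nonempty →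
      (∀ y ∈ S, ∀ z ∈ S, G.Adj y z → y ∈ P → z ∈ P) → S ⊆ P := by
  constructor
  · intro hS
    refine ⟨Set.nonempty_coe_sort.1 hS.nonempty, fun P ⟨x, hxS, hxP⟩ hP y hy => ?_⟩
    obtain ⟨w⟩ := hS.preconnected ⟨x, hxS⟩ ⟨y, hy⟩
    have walk_mem : ∀ {u v : S}, (G.induce S).Walk u v → (u : V) ∈ P → (v : V) ∈ P := by
      intro u v w
      induction w with
      | nil => exact id
      | @cons u v _ huv _ ih => exact fun hu => ih (hP u u.2 v v.2 huv hu)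
    exact walk_mem w hxP
  · rintro ⟨⟨x, hx⟩, hcut⟩
    have reach : ∀ y (hy : y ∈ S), (G.induce S).Reachable ⟨x, hx⟩ ⟨y, hy⟩ := by
      intro y hy
      refine (hcut {y | ∃ hy : y ∈ S, (G.induce S).Reachable ⟨x, hx⟩ ⟨y, hy⟩}
        ⟨x, hx, hx, .rfl⟩ ?_ hy).2
      rintro y - z hz hyz ⟨_, hr⟩
      exact ⟨hz, hr.trans (Adj.reachable hyz)⟩
    have : Nonempty S := ⟨⟨x, hx⟩⟩
    exact ⟨fun u v => (reach u u.2).symm.trans (reach v v.2)⟩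

/-- `f` assigns to the vertices of `K` the branch sets of a `K`-minor of `G`. -/
structure IsModel (K : SimpleGraph α) (G : SimpleGraph V) (f : α → Set V) : Prop where
  connected : ∀ i, (G.induce (f i)).Connected
  disjoint : ∀ i j, i ≠ j → Disjoint (f i) (f j)
  adj : ∀ i j, K.Adj i j → ∃ u ∈ f i, ∃ v ∈ f j, G.Adj u v

lemma isMinor_iff_exists_isModel : IsMinor K G ↔ ∃ f : α → Set V, IsModel K G f :=
  ⟨fun ⟨f, h₁, h₂, h₃⟩ => ⟨f, h₁, h₂, h₃⟩, fun ⟨f, h⟩ => ⟨f, h.1, h.2, h.3⟩⟩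

lemma IsModel.eq_of_mem {f : α → Set V} (hf : IsModel K G f) {i j : α} {x : V}
    (hi : x ∈ f i) (hj : x ∈ f j) : i = j :=
  by_contra fun hij => Set.disjoint_left.1 (hf.disjoint i j hij) hi hj

lemma _root_.IsMinor.mono (hle : G ≤ G') (hG : IsMinor K G) : IsMinor K G' := by
  obtain ⟨f, h₁, h₂, h₃⟩ := hG
  refine ⟨f, fun i => (h₁ i).mono (comap_monotone _ hle), h₂, fun i j hij => ?_⟩
  obtain ⟨u, hu, v, hv, huv⟩ := h₃ i j hij
  exact ⟨u, hu, v, hv, hle huv⟩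

lemma _root_.IsPlanar.mono (hle : G ≤ G') (hG' : IsPlanar G') : IsPlanar G :=
  ⟨fun h => hG'.1 (h.mono hle), fun h => hG'.2 (h.mono hle)⟩

/-! ### Separations of order at most two -/

/-- The edges of `G` inside `A`, as a graph on the original vertex type. -/
def restrict (G : SimpleGraph V) (A : Set V) : SimpleGraph V where
  Adj x y := G.Adj x y ∧ x ∈ A ∧ y ∈ A
  symm := ⟨fun _ _ h => ⟨h.1.symm, h.2.2, h.2.1⟩⟩
  loopless := ⟨fun _ h => G.irrefl h.1⟩

/-- The torso of the side `A` of a separation with separator `{a, b}`: the graph `G[A]` with the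
virtual edge `ab` added. For `a = b` there is no virtual edge, as `edge a a = ⊥`. -/
def torso (G : SimpleGraph V) (A : Set V) (a b : V) : SimpleGraph V :=
  restrict G A ⊔ edge a b

lemma restrict_le (G : SimpleGraph V) (A : Set V) : restrict G A ≤ G := fun _ _ h => h.1

lemma torso_adj_of_adj {x y : V} (h : G.Adj x y) (hx : x ∈ A) (hy : y ∈ A) :
    (torso G A a b).Adj x y :=
  Or.inl ⟨h, hx, hy⟩

lemma torso_adj_virtual (hab : a ≠ b) : (torso G A a b).Adj a b :=
  Or.inr ((edge_adj _ _ _ _).2 ⟨Or.inl ⟨rfl, rfl⟩, hab⟩)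

lemma torso_adj_cases {x y : V} (h : (torso G A a b).Adj x y) :
    (G.Adj x y ∧ x ∈ A ∧ y ∈ A) ∨ (x = a ∧ y = b) ∨ (x = b ∧ y = a) :=
  h.imp_right fun h => ((edge_adj _ _ _ _).1 h).1

/-- `(A, B)` is a separation of `G` with separator `{a, b}`; the case `a = b` of order one is
allowed. -/
structure IsTwoSeparation (G : SimpleGraph V) (A B : Set V) (a b : V) : Prop where
  inter_eq : A ∩ B = {a, b}
  union_eq : A ∪ B = Set.univ
  adj : ∀ x y, G.Adj x y → (x ∈ A ∧ y ∈ A) ∨ (x ∈ B ∧ y ∈ B)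

namespace IsTwoSeparation

lemma symm (h : IsTwoSeparation G A B a b) : IsTwoSeparation G B A a b :=
  ⟨Set.inter_comm A B ▸ h.inter_eq, Set.union_comm A B ▸ h.union_eq, fun x y hxy =>
    (h.adj x y hxy).symm⟩

lemma left_mem (h : IsTwoSeparation G A B a b) : a ∈ A ∩ B := h.inter_eq ▸ Or.inl rfl

lemma right_mem (h : IsTwoSeparation G A B a b) : b ∈ A ∩ B := h.inter_eq ▸ Or.inr rfl

lemma eq_or_eq (h : IsTwoSeparation G A B a b) {x : V} (hA : x ∈ A) (hB : x ∈ B) :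
    x = a ∨ x = b :=
  h.inter_eq.subset ⟨hA, hB⟩

lemma mem_of_notMem (h : IsTwoSeparation G A B a b) {x : V} (hB : x ∉ B) : x ∈ A :=
  (h.union_eq ▸ Set.mem_univ x : x ∈ A ∪ B).resolve_right hB

lemma disjoint_of_connected (h : IsTwoSeparation G A B a b) (hS : (G.induce S).Connected)
    (ha : a ∉ S) (hb : b ∉ S) (hSB : (S ∩ B).Nonempty) : Disjoint S A := by
  have notMem : ∀ x ∈ S, x ∈ B → x ∉ A := fun x hx hB hA => by
    rcases h.eq_or_eq hA hB with rfl | rfl <;> contradiction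
  refine Set.disjoint_left.2 ((connected_induce_iff_forall_cut.1 hS).2 {x | x ∉ A} ?_ ?_)
  · obtain ⟨x, hx, hB⟩ := hSB
    exact ⟨x, hx, notMem x hx hB⟩
  · intro y _ z hz hyz hy
    rcases h.adj y z hyz with hA | hB
    · exact absurd hA.1 hy
    · exact notMem z hz hB.2

lemma connected_inter (h : IsTwoSeparation G A B a b) (hS : (G.induce S).Connected)
    (hSB : (S ∩ B).Nonempty) : ((torso G B a b).induce (S ∩ B)).Connected := by
  refine connected_induce_iff_forall_cut.2 ⟨hSB, fun P ⟨x, hx, hxP⟩ hP y hy => ?_⟩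
  -- The separator vertices of `S` are adjacent in the torso, so `P` contains all or none of them.
  have separator_mem : ∀ u v, u ∈ ({a, b} : Set V) → v ∈ ({a, b} : Set V) →
      u ∈ S → v ∈ S → u ∈ P → v ∈ P := by
    intro u v hu hv huS hvS huP
    rcases eq_or_ne u v with rfl | huv
    · exact huP
    have hu' := h.inter_eq ▸ hu
    have hv' := h.inter_eq ▸ hv
    refine hP u ⟨huS, hu'.2⟩ v ⟨hvS, hv'.2⟩ ?_ huP
    rcases hu with rfl | rfl <;> rcases hv with rfl | rfl
    · contradiction
    · exact torso_adj_virtual huv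
    · exact (torso_adj_virtual huv.symm).symm
    · contradiction
  let P' : Set V := {y | (y ∈ B → y ∈ P) ∧ (y ∉ B → ∃ c ∈ ({a, b} : Set V), c ∈ S ∧ c ∈ P)}
  have hSP' : S ⊆ P' := by
    refine (connected_induce_iff_forall_cut.1 hS).2 P'
      ⟨x, hx.1, fun _ => hxP, fun hxB => absurd hx.2 hxB⟩ ?_
    rintro y hy z hz hyz ⟨hyP, hyc⟩
    by_cases hyB : y ∈ B <;> by_cases hzB : z ∈ B
    · exact ⟨fun _ => hP y ⟨hy, hyB⟩ z ⟨hz, hzB⟩ (torso_adj_of_adj hyz hyB hzB) (hyP hyB),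
        fun h => absurd hzB h⟩
    · have hA := (h.adj y z hyz).resolve_right fun h => hzB h.2
      exact ⟨fun h => absurd h hzB, fun _ => ⟨y, h.eq_or_eq hA.1 hyB, hy, hyP hyB⟩⟩
    · have hA := (h.adj y z hyz).resolve_right fun h => hyB h.1
      obtain ⟨c, hc, hcS, hcP⟩ := hyc hyB
      exact ⟨fun _ => separator_mem c z hc (h.eq_or_eq hA.2 hzB) hcS hz hcP,
        fun h => absurd hzB h⟩
    · exact ⟨fun h => absurd h hzB, fun _ => hyc hyB⟩
  exact (hSP' hy.1).1 hy.2

lemma isModel_inter (h : IsTwoSeparation G A B a b) {f : α → Set V} (hf : IsModel K G f)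
    (hfB : ∀ i, (f i ∩ B).Nonempty) : IsModel K (torso G B a b) fun i => f i ∩ B where
  connected i := h.connected_inter (hf.connected i) (hfB i)
  disjoint i j hij := (hf.disjoint i j hij).mono Set.inter_subset_left Set.inter_subset_left
  adj i j hij := by
    obtain ⟨u, hu, v, hv, huv⟩ := hf.adj i j hij
    by_cases hB : u ∈ B ∧ v ∈ B
    · exact ⟨u, ⟨hu, hB.1⟩, v, ⟨hv, hB.2⟩, torso_adj_of_adj huv hB.1 hB.2⟩
    -- Both branch sets reach outside `B`, so each of them contains one of `a` and `b`.
    have hA := (h.adj u v huv).resolve_right hB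
    have separator : ∀ k x, x ∈ f k → x ∈ A → a ∈ f k ∨ b ∈ f k := fun k x hx hxA => by
      by_contra! hk
      exact Set.disjoint_left.1
        (h.disjoint_of_connected (hf.connected k) hk.1 hk.2 (hfB k)) hx hxA
    have ne : ∀ {x y}, x ∈ f i → y ∈ f j → x ≠ y := fun hx hy hxy =>
      hij.ne (hf.eq_of_mem hx (hxy ▸ hy))
    rcases separator i u hu hA.1 with hi | hi <;> rcases separator j v hv hA.2 with hj | hj
    · exact absurd rfl (ne hi hj)
    · exact ⟨a, ⟨hi, h.left_mem.2⟩, b, ⟨hj, h.right_mem.2⟩, torso_adj_virtual (ne hi hj)⟩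
    · exact ⟨b, ⟨hi, h.right_mem.2⟩, a, ⟨hj, h.left_mem.2⟩,
        (torso_adj_virtual (ne hi hj).symm).symm⟩
    · exact absurd rfl (ne hi hj)

end IsTwoSeparation

/-- The properties of `K₅` and `K₃,₃` that decide which operations keep a graph planar. The set `X`
in `connected` is what remains of `K` after deleting at most two vertices. -/
structure IsKuratowskiLike (K : SimpleGraph α) : Prop where
  connected : ∀ X : Set α, Xᶜ.encard ≤ 2 → (K.induce X).Connected
  exists_adj : ∀ i, ∃ j, K.Adj i j
  card_add_two_lt : Nat.card α + 2 < K.edgeSet.ncard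

/-- The branch sets avoiding the separator are joined to each other, so they all lie strictly on
one side. -/
lemma IsTwoSeparation.isMinor_torso_or (h : IsTwoSeparation G A B a b) (hK : IsKuratowskiLike K)
    (hG : IsMinor K G) : IsMinor K (torso G A a b) ∨ IsMinor K (torso G B a b) := by
  obtain ⟨f, hf⟩ := isMinor_iff_exists_isModel.1 hG
  let X : Set α := {i | a ∉ f i ∧ b ∉ f i}
  have hX : (K.induce X).Connected := by
    have encard_le_one : ∀ c, {i | c ∈ f i}.encard ≤ 1 := fun c =>
      Set.encard_le_one_iff.2 fun i j hi hj => hf.eq_of_mem hi hj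
    refine hK.connected X ?_
    calc Xᶜ.encard ≤ ({i | a ∈ f i} ∪ {i | b ∈ f i}).encard :=
          Set.encard_le_encard fun i hi => (not_and_or.1 hi).imp not_not.1 not_not.1
      _ ≤ 1 + 1 := (Set.encard_union_le _ _).trans
          (add_le_add (encard_le_one a) (encard_le_one b))
      _ = 2 := one_add_one_eq_two
  by_cases hB : (X ∩ {i | (f i ∩ B).Nonempty}).Nonempty
  · right
    have hXB := (connected_induce_iff_forall_cut.1 hX).2 _ hB fun i hi j _ hij hfi => by
      have hA := h.disjoint_of_connected (hf.connected i) hi.1 hi.2 hfi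
      obtain ⟨u, hu, v, hv, huv⟩ := hf.adj i j hij
      rcases h.adj u v huv with huv | huv
      · exact absurd huv.1 (Set.disjoint_left.1 hA hu)
      · exact ⟨v, hv, huv.2⟩
    refine isMinor_iff_exists_isModel.2 ⟨_, h.isModel_inter hf fun i => ?_⟩
    by_cases ha : a ∈ f i
    · exact ⟨a, ha, h.left_mem.2⟩
    by_cases hb : b ∈ f i
    · exact ⟨b, hb, h.right_mem.2⟩
    exact hXB ⟨ha, hb⟩
  · left
    refine isMinor_iff_exists_isModel.2 ⟨_, h.symm.isModel_inter hf fun i => ?_⟩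
    by_cases ha : a ∈ f i
    · exact ⟨a, ha, h.left_mem.1⟩
    by_cases hb : b ∈ f i
    · exact ⟨b, hb, h.right_mem.1⟩
    obtain ⟨x, hx⟩ := Set.nonempty_coe_sort.1 (hf.connected i).nonempty
    exact ⟨x, hx, h.mem_of_notMem fun hxB => hB ⟨i, ⟨ha, hb⟩, x, hx, hxB⟩⟩

/-! ### Contractions -/

lemma connected_biUnion {W : Type*} {G' : SimpleGraph W} {S : Set W} {T : W → Set V}
    (hS : (G'.induce S).Connected) (hT : ∀ w ∈ S, (G.induce (T w)).Connected)
    (hadj : ∀ w w', G'.Adj w w' → ∃ u ∈ T w, ∃ v ∈ T w', G.Adj u v) :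
    (G.induce (⋃ w ∈ S, T w)).Connected := by
  simp only [connected_induce_iff_forall_cut] at hS hT ⊢
  have mem : ∀ w ∈ S, T w ⊆ ⋃ w ∈ S, T w := fun w hw => Set.subset_biUnion_of_mem hw
  obtain ⟨w₀, hw₀⟩ := hS.1
  refine ⟨(hT w₀ hw₀).1.mono (mem w₀ hw₀), fun P ⟨x, hx, hxP⟩ hP => ?_⟩
  have fibre_subset : ∀ w ∈ S, (T w ∩ P).Nonempty → T w ⊆ P := fun w hw hwP =>
    (hT w hw).2 P hwP fun y hy z hz => hP y (mem w hw hy) z (mem w hw hz)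
  obtain ⟨w, hw, hxw⟩ := Set.mem_iUnion₂.1 hx
  have hSP := hS.2 {w | T w ⊆ P} ⟨w, hw, fibre_subset w hw ⟨x, hxw, hxP⟩⟩
    fun y hy z hz hyz hyP => by
      obtain ⟨u, hu, v, hv, huv⟩ := hadj y z hyz
      exact fibre_subset z hz ⟨v, hv, hP u (mem y hy hu) v (mem z hz hv) huv (hyP hu)⟩
  exact Set.iUnion₂_subset hSP

lemma IsModel.biUnion {W : Type*} {G' : SimpleGraph W} {f : α → Set W} {U : Set W} {T : W → Set V}
    (hf : IsModel K G' f) (hfU : ∀ i, f i ⊆ U) (hT : ∀ w ∈ U, (G.induce (T w)).Connected)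
    (hdisj : U.PairwiseDisjoint T)
    (hadj : ∀ w w', G'.Adj w w' → ∃ u ∈ T w, ∃ v ∈ T w', G.Adj u v) :
    IsModel K G fun i => ⋃ w ∈ f i, T w where
  connected i := connected_biUnion (hf.connected i) (fun w hw => hT w (hfU i hw)) hadj
  disjoint i j hij := by
    simp only [Set.disjoint_iUnion_left, Set.disjoint_iUnion_right]
    intro w hw w' hw'
    exact hdisj (hfU i hw') (hfU j hw) fun h => hij (hf.eq_of_mem hw' (h ▸ hw))
  adj i j hij := by
    obtain ⟨w, hw, w', hw', hww'⟩ := hf.adj i j hij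
    obtain ⟨u, hu, v, hv, huv⟩ := hadj w w' hww'
    exact ⟨u, Set.mem_biUnion hw hu, v, Set.mem_biUnion hw' hv, huv⟩

/-- The torso is obtained from `G` by contracting `Q` onto `a`. -/
lemma IsKuratowskiLike.isMinor_of_torso (hK : IsKuratowskiLike K) {Q : Set V} {q : V}
    (hbB : b ∈ B) (hQ : (G.induce Q).Connected) (hQB : Q ∩ B = {a})
    (hq : q ∈ Q) (hqb : G.Adj q b) (hm : IsMinor K (torso G B a b)) : IsMinor K G := by
  classical
  obtain ⟨f, hf⟩ := isMinor_iff_exists_isModel.1 hm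
  have haQB : a ∈ Q ∩ B := hQB ▸ rfl
  have torso_mem : ∀ x y, (torso G B a b).Adj x y → x ∈ B := fun x y hxy => by
    rcases torso_adj_cases hxy with h | ⟨rfl, -⟩ | ⟨rfl, -⟩
    exacts [h.2.1, haQB.2, hbB]
  have hfB : ∀ i, f i ⊆ B := fun i => by
    obtain ⟨j, hij⟩ := hK.exists_adj i
    obtain ⟨u, hu, v, -, huv⟩ := hf.adj i j hij
    exact (connected_induce_iff_forall_cut.1 (hf.connected i)).2 B ⟨u, hu, torso_mem u v huv⟩
      fun y _ z _ hyz _ => torso_mem z y hyz.symm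
  obtain ⟨T, hTa, hT⟩ : ∃ T : V → Set V, T a = Q ∧ ∀ x, x ≠ a → T x = {x} :=
    ⟨Function.update (fun x => {x}) a Q, by simp, fun x hx => by simp [hx]⟩
  have mem_fibre : ∀ x, x ∈ T x := fun x => by
    by_cases hx : x = a
    · exact hx ▸ hTa ▸ haQB.1
    · exact hT x hx ▸ rfl
  have disjoint_fibre : ∀ x ∈ B, x ≠ a → Disjoint (T a) (T x) := fun x hx hxa => by
    rw [hTa, hT x hxa]
    exact Set.disjoint_singleton_right.2 fun hxQ => hxa (hQB.subset ⟨hxQ, hx⟩)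
  refine isMinor_iff_exists_isModel.2 ⟨_, hf.biUnion (T := T) hfB (fun x _ => ?_) ?_ ?_⟩
  · by_cases hx : x = a
    · rwa [hx, hTa]
    · rw [hT x hx]
      exact connected_induce_iff_forall_cut.2
        ⟨Set.singleton_nonempty x, fun P hP _ => by simpa using hP⟩
  · intro x hx y hy hxy
    by_cases hxa : x = a
    · subst hxa
      exact disjoint_fibre y hy hxy.symm
    by_cases hya : y = a
    · subst hya
      exact (disjoint_fibre x hx hxy).symm
    · simpa [Function.onFun, hT x hxa, hT y hya] using hxy
  · intro x y hxy
    rcases torso_adj_cases hxy with h | ⟨rfl, rfl⟩ | ⟨rfl, rfl⟩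
    · exact ⟨x, mem_fibre x, y, mem_fibre y, h.1⟩
    · exact ⟨q, hTa ▸ hq, y, mem_fibre y, hqb⟩
    · exact ⟨x, mem_fibre x, q, hTa ▸ hq, hqb.symm⟩

/-! ### Minors have few edges in nearly functional graphs -/

/-- The edges of `G` with both ends in `S`. -/
def edgesIn (G : SimpleGraph V) (S : Set V) : Set (Sym2 V) :=
  {e ∈ G.edgeSet | ∀ x ∈ e, x ∈ S}

lemma ncard_le_ncard_edgesIn_add_one [Finite V] (hS : (G.induce S).Connected) :
    S.ncard ≤ (edgesIn G S).ncard + 1 := by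
  have hle : Nat.card (G.induce S).edgeSet ≤ (edgesIn G S).ncard := by
    rw [Nat.card_coe_set_eq]
    refine Set.ncard_le_ncard_of_injOn (Sym2.map Subtype.val) ?_
      (Sym2.map.injective Subtype.val_injective).injOn (Set.toFinite _)
    intro e
    induction e with | _ x y => exact fun h => ⟨h, by simp⟩
  have := hS.card_vert_le_card_edgeSet_add_one
  rw [Nat.card_coe_set_eq] at this
  omega

/-- Distinct branch sets and distinct edges of `K` give disjoint sets of edges of `G`. -/
lemma IsModel.sum_ncard_edgesIn_add_le [Fintype α] [Finite V] {f : α → Set V}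
    (hf : IsModel K G f) :
    ∑ i, (edgesIn G (f i)).ncard + K.edgeSet.ncard ≤ (edgesIn G (⋃ i, f i)).ncard := by
  have exists_edge : ∀ ε : K.edgeSet, ∃ e : edgesIn G (⋃ i, f i), ∃ i j u v, i ≠ j ∧
      ε.1 = s(i, j) ∧ u ∈ f i ∧ v ∈ f j ∧ e.1 = s(u, v) := by
    rintro ⟨ε, hε⟩
    induction ε with | _ i j =>
    obtain ⟨u, hu, v, hv, huv⟩ := hf.adj i j hε
    refine ⟨⟨s(u, v), huv, fun x hx => ?_⟩, i, j, u, v, K.ne_of_adj hε, rfl, hu, hv, rfl⟩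
    rcases Sym2.mem_iff.1 hx with rfl | rfl
    exacts [Set.mem_iUnion_of_mem i hu, Set.mem_iUnion_of_mem j hv]
  choose cross hcross using exists_edge
  let inner : (Σ i, edgesIn G (f i)) → edgesIn G (⋃ i, f i) := fun p =>
    ⟨p.2, p.2.2.1, fun x hx => Set.mem_iUnion_of_mem p.1 (p.2.2.2 x hx)⟩
  have inner_injective : Function.Injective inner := by
    rintro ⟨i, e, he⟩ ⟨j, e', he'⟩ h
    obtain rfl : e = e' := congrArg Subtype.val h
    obtain rfl : i = j := hf.eq_of_mem (he.2 _ e.out_fst_mem) (he'.2 _ e.out_fst_mem)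
    rfl
  have cross_injective : Function.Injective cross := by
    intro ε ε' h
    obtain ⟨i, j, u, v, -, hε, hu, hv, he⟩ := hcross ε
    obtain ⟨i', j', u', v', -, hε', hu', hv', he'⟩ := hcross ε'
    rw [h, he', Sym2.eq_iff] at he
    apply Subtype.ext
    rcases he with ⟨rfl, rfl⟩ | ⟨rfl, rfl⟩
    · rw [hε, hε', hf.eq_of_mem hu hu', hf.eq_of_mem hv hv']
    · rw [hε, hε', hf.eq_of_mem hu hv', hf.eq_of_mem hv hu', Sym2.eq_swap]
  have inner_ne_cross : ∀ p ε, inner p ≠ cross ε := by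
    rintro ⟨k, e, he⟩ ε h
    obtain ⟨i, j, u, v, hij, -, hu, hv, hε⟩ := hcross ε
    obtain rfl : e = s(u, v) := (congrArg Subtype.val h).trans hε
    exact hij ((hf.eq_of_mem hu (he.2 u (by simp))).trans (hf.eq_of_mem (he.2 v (by simp)) hv))
  have := Nat.card_le_card_of_injective (Sum.elim inner cross)
    (inner_injective.sumElim cross_injective inner_ne_cross)
  simpa only [Nat.card_sum, Nat.card_sigma, Nat.card_coe_set_eq] using this

lemma ncard_edgesIn_le_of_functional [Finite V] {par : V → V} {E : Set (Sym2 V)}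
    (hE : E.ncard ≤ 2) (hG : ∀ x y, G.Adj x y → par x = y ∨ par y = x ∨ s(x, y) ∈ E)
    (U : Set V) :
    (edgesIn G U).ncard ≤ U.ncard + 2 := by
  have hsub : edgesIn G U ⊆ (fun x => s(x, par x)) '' U ∪ E := by
    rintro ⟨x, y⟩ ⟨he, hU⟩
    rcases hG x y he with rfl | rfl | h
    · exact Or.inl ⟨x, hU x (by simp), rfl⟩
    · exact Or.inl ⟨y, hU y (by simp), Sym2.eq_swap⟩
    · exact Or.inr h
  calc (edgesIn G U).ncard ≤ _ := Set.ncard_le_ncard hsub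
    _ ≤ _ := Set.ncard_union_le _ _
    _ ≤ _ := add_le_add (Set.ncard_image_le U.toFinite) hE

lemma IsKuratowskiLike.not_isMinor_of_functional [Finite α] [Finite V] (hK : IsKuratowskiLike K)
    {par : V → V} {E : Set (Sym2 V)}
    (hE : E.ncard ≤ 2) (hG : ∀ x y, G.Adj x y → par x = y ∨ par y = x ∨ s(x, y) ∈ E) :
    ¬ IsMinor K G := by
  intro hm
  have := Fintype.ofFinite α
  obtain ⟨f, hf⟩ := isMinor_iff_exists_isModel.1 hm
  have hU : (⋃ i, f i).ncard ≤ ∑ i, (edgesIn G (f i)).ncard + Nat.card α :=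
    calc (⋃ i, f i).ncard ≤ ∑ i, (f i).ncard := Set.ncard_iUnion_le_of_fintype f
      _ ≤ ∑ i, ((edgesIn G (f i)).ncard + 1) :=
        Finset.sum_le_sum fun i _ => ncard_le_ncard_edgesIn_add_one (hf.connected i)
      _ = _ := by simp [Finset.sum_add_distrib]
  have := hf.sum_ncard_edgesIn_add_le
  have := ncard_edgesIn_le_of_functional hE hG (⋃ i, f i)
  have := hK.card_add_two_lt
  omega

/-! ### Operations that preserve planarity -/

lemma exists_mem_of_encard_compl_le_two {X : Set α} (hX : Xᶜ.encard ≤ 2) {g : Fin 3 → α}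
    (hg : Function.Injective g) : ∃ i, g i ∈ X := by
  by_contra! h
  have hle : (Set.range g).encard ≤ Xᶜ.encard :=
    Set.encard_le_encard (Set.range_subset_iff.2 h)
  rw [← Set.image_univ, hg.encard_image, Set.encard_univ, ENat.card_eq_coe_fintype_card,
    Fintype.card_fin] at hle
  exact absurd (hle.trans hX) (by decide)

lemma isKuratowskiLike_completeGraph_five : IsKuratowskiLike (completeGraph (Fin 5)) where
  connected X hX := by
    obtain ⟨i, hi⟩ := exists_mem_of_encard_compl_le_two hX
      (Fin.castLE_injective (by decide : 3 ≤ 5))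
    refine connected_induce_iff_forall_cut.2 ⟨⟨_, hi⟩, fun P ⟨x, hx, hxP⟩ hP y hy => ?_⟩
    rcases eq_or_ne x y with rfl | hxy
    exacts [hxP, hP x hx y hy hxy hxP]
  exists_adj i := exists_ne i |>.imp fun _ => Ne.symm
  card_add_two_lt := by
    have := card_edgeFinset_top_eq_card_choose_two (V := Fin 5)
    rw [completeGraph_eq_top, ← coe_edgeFinset, Set.ncard_coe_finset, this]
    simp [Nat.choose]

lemma isKuratowskiLike_completeBipartiteGraph_three :
    IsKuratowskiLike (completeBipartiteGraph (Fin 3) (Fin 3)) where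
  connected X hX := by
    obtain ⟨l, hl⟩ := exists_mem_of_encard_compl_le_two hX Sum.inl_injective
    obtain ⟨r, hr⟩ := exists_mem_of_encard_compl_le_two hX Sum.inr_injective
    refine connected_induce_iff_forall_cut.2 ⟨⟨_, hl⟩, fun P ⟨x, hx, hxP⟩ hP => ?_⟩
    have hlr : ∀ i j, Sum.inl i ∈ X → Sum.inr j ∈ X → (Sum.inl i ∈ P ↔ Sum.inr j ∈ P) :=
      fun i j hi hj => ⟨hP _ hi _ hj (by simp), hP _ hj _ hi (by simp)⟩
    have hlP : Sum.inl l ∈ P := by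
      rcases x with i | j
      · exact (hlr l r hl hr).2 ((hlr i r hx hr).1 hxP)
      · exact (hlr l j hl hx).2 hxP
    rintro (i | j) hy
    · exact (hlr i r hy hr).2 ((hlr l r hl hr).1 hlP)
    · exact (hlr l j hl hy).1 hlP
  exists_adj := by
    rintro (i | i)
    exacts [⟨Sum.inr 0, by simp⟩, ⟨Sum.inl 0, by simp⟩]
  card_add_two_lt := by
    let g : Fin 3 × Fin 3 → Sym2 (Fin 3 ⊕ Fin 3) := fun p => s(Sum.inl p.1, Sum.inr p.2)
    have hg : Function.Injective g := fun p q h => by simpa [g, Prod.ext_iff] using h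
    have hle : (Set.range g).ncard ≤ _ := Set.ncard_le_ncard
      (Set.range_subset_iff.2 fun p => (by simp [g] :
        g p ∈ (completeBipartiteGraph (Fin 3) (Fin 3)).edgeSet))
    rw [← Set.image_univ, Set.ncard_image_of_injective _ hg, Set.ncard_univ] at hle
    exact lt_of_lt_of_le (by simp) hle

lemma IsTwoSeparation.isPlanar (h : IsTwoSeparation G A B a b) (hA : IsPlanar (torso G A a b))
    (hB : IsPlanar (torso G B a b)) : IsPlanar G :=
  ⟨fun hm => (h.isMinor_torso_or isKuratowskiLike_completeGraph_five hm).elim hA.1 hB.1,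
    fun hm => (h.isMinor_torso_or isKuratowskiLike_completeBipartiteGraph_three hm).elim hA.2 hB.2⟩

lemma isPlanar_of_functional [Finite V] {par : V → V} {E : Set (Sym2 V)}
    (hE : E.ncard ≤ 2) (hG : ∀ x y, G.Adj x y → par x = y ∨ par y = x ∨ s(x, y) ∈ E) :
    IsPlanar G :=
  ⟨isKuratowskiLike_completeGraph_five.not_isMinor_of_functional hE hG,
    isKuratowskiLike_completeBipartiteGraph_three.not_isMinor_of_functional hE hG⟩

lemma exists_connected_subset_diff_singleton (hS : (G.induce S).Connected) (haS : a ∈ S)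
    (hbS : b ∈ S) (hab : a ≠ b) :
    ∃ Q ⊆ S \ {b}, a ∈ Q ∧ (G.induce Q).Connected ∧ ∃ q ∈ Q, G.Adj q b := by
  obtain ⟨p, hp⟩ := hS.exists_isPath ⟨a, haS⟩ ⟨b, hbS⟩
  have hnil : ¬ p.Nil := fun h => hab (congrArg Subtype.val h.eq)
  have hadj := p.adj_penultimate hnil
  rw [← p.concat_dropLast hadj, Walk.concat_isPath_iff] at hp
  let Q := p.dropLast.map (Embedding.induce S).toHom
  refine ⟨{x | x ∈ Q.support}, ?_, Q.start_mem_support, Q.connected_induce_support,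
    p.penultimate, Q.end_mem_support, hadj⟩
  intro x hx
  obtain ⟨y, hy, rfl⟩ := List.mem_map.1 (Walk.support_map _ _ ▸ hx)
  exact ⟨y.2, fun hyb => hp.2 ((Subtype.ext hyb : y = ⟨b, hbS⟩) ▸ hy)⟩

/-- All of `S` except `b` is contracted onto `a`, as far as it is connected to `a` there. -/
lemma _root_.IsPlanar.torso_compl_union (hG : IsPlanar G) (hS : (G.induce S).Connected)
    (haS : a ∈ S) (hbS : b ∈ S) : IsPlanar (torso G (Sᶜ ∪ {a, b}) a b) := by
  rcases eq_or_ne a b with rfl | hab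
  · exact hG.mono (by simpa [torso] using restrict_le G _)
  obtain ⟨Q, hQS, haQ, hQ, q, hq, hqb⟩ := exists_connected_subset_diff_singleton hS haS hbS hab
  have hQB : Q ∩ (Sᶜ ∪ {a, b}) = {a} := by
    ext x
    constructor
    · rintro ⟨hx, hxS | rfl | rfl⟩
      exacts [absurd (hQS hx).1 hxS, rfl, absurd rfl (hQS hx).2]
    · rintro rfl
      exact ⟨haQ, by simp⟩
  have hbB : b ∈ Sᶜ ∪ {a, b} := by simp
  exact ⟨fun hm => hG.1 (isKuratowskiLike_completeGraph_five.isMinor_of_torso hbB hQ hQB hq hqb hm),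
    fun hm => hG.2
      (isKuratowskiLike_completeBipartiteGraph_three.isMinor_of_torso hbB hQ hQB hq hqb hm)⟩

lemma isPlanar_bot [Finite V] : IsPlanar (⊥ : SimpleGraph V) :=
  isPlanar_of_functional (par := id) (E := ∅) (by simp) fun _ _ h => h.elim

lemma isPlanar_edge [Finite V] (x y : V) : IsPlanar (edge x y) :=
  isPlanar_of_functional (par := id) (E := {s(x, y)}) (by simp) fun _ _ huv =>
    Or.inr (Or.inr (edgeSet_edge_subset huv))

lemma _root_.IsPlanar.sup_of_support_inter_subset {T : SimpleGraph V} (hG : IsPlanar G)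
    (hT : IsPlanar T) (h : G.support ∩ T.support ⊆ {a}) : IsPlanar (G ⊔ T) := by
  have hsep : IsTwoSeparation (G ⊔ T) (T.support ∪ {a}) (T.supportᶜ ∪ {a}) a a := by
    refine ⟨by rw [← Set.inter_union_distrib_right]; simp,
      by rw [← Set.union_union_distrib_right]; simp, ?_⟩
    have mem : ∀ x y, G.Adj x y → x ∈ T.supportᶜ ∪ {a} := fun x y hxy =>
      (em (x ∈ T.support)).elim (fun hx => Or.inr (h ⟨⟨y, hxy⟩, hx⟩)) Or.inl
    rintro x y (hxy | hxy)
    · exact Or.inr ⟨mem x y hxy, mem y x hxy.symm⟩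
    · exact Or.inl ⟨Or.inl ⟨y, hxy⟩, Or.inl ⟨x, hxy.symm⟩⟩
  refine hsep.isPlanar (hT.mono ?_) (hG.mono ?_) <;>
    rw [torso, edge_self_eq_bot, sup_bot_eq] <;> rintro x y ⟨hxy | hxy, hx, hy⟩
  · have eq : ∀ x y, G.Adj x y → x ∈ T.support ∪ {a} → x = a := fun x y hxy hx =>
      hx.elim (fun hx => h ⟨⟨y, hxy⟩, hx⟩) id
    exact absurd ((eq x y hxy hx).trans (eq y x hxy.symm hy).symm) hxy.ne
  · exact hxy
  · exact hxy
  · have eq : ∀ x y, T.Adj x y → x ∈ T.supportᶜ ∪ {a} → x = a := fun x y hxy hx =>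
      hx.elim (fun hx => absurd ⟨y, hxy⟩ hx) id
    exact absurd ((eq x y hxy hx).trans (eq y x hxy.symm hy).symm) hxy.ne

lemma support_edge_subset (x y : V) : (edge x y).support ⊆ {x, y} := by
  rintro u ⟨v, huv⟩
  rcases (edge_adj _ _ _ _).1 huv with ⟨⟨rfl, -⟩ | ⟨rfl, -⟩, -⟩ <;> simp

lemma support_restrict_subset (G : SimpleGraph V) (A : Set V) : (restrict G A).support ⊆ A :=
  fun _ ⟨_, h⟩ => h.2.1

lemma _root_.IsPlanar.sup_edge_of_not_reachable [Finite V] (hG : IsPlanar G) {x y : V}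
    (hxy : ¬ G.Reachable x y) : IsPlanar (G ⊔ edge x y) := by
  let R : Set V := {v | G.Reachable x v}
  have hle : G ⊔ edge x y ≤ restrict G R ⊔ edge x y ⊔ restrict G Rᶜ := by
    rintro u v (huv | huv)
    · by_cases hu : u ∈ R
      · exact Or.inl (Or.inl ⟨huv, hu, hu.trans huv.reachable⟩)
      · exact Or.inr ⟨huv, hu, fun hv => hu (hv.trans huv.symm.reachable)⟩
    · exact Or.inl (Or.inr huv)
  have hR : IsPlanar (restrict G R ⊔ edge x y) := by
    refine (hG.mono (restrict_le G R)).sup_of_support_inter_subset (a := x) (isPlanar_edge x y) ?_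
    rintro v ⟨hv, hv'⟩
    rcases support_edge_subset x y hv' with rfl | rfl
    exacts [rfl, absurd (support_restrict_subset G R hv) hxy]
  refine (hR.sup_of_support_inter_subset (a := y) (hG.mono (restrict_le G Rᶜ)) ?_).mono hle
  rintro v ⟨⟨w, hvw | hvw⟩, hv⟩
  · exact absurd hvw.2.1 (support_restrict_subset G Rᶜ hv)
  · rcases support_edge_subset x y ⟨w, hvw⟩ with rfl | rfl
    exacts [absurd (Reachable.refl v) (support_restrict_subset G Rᶜ hv), rfl]

/-- Suppressing `v` leaves a subgraph of the torso of a separation whose other side is the path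
`uvw`. -/
lemma _root_.IsPlanar.deleteIncidenceSet_sup_edge (hG : IsPlanar G) {u v w : V} (huv : G.Adj u v)
    (hvw : G.Adj v w) : IsPlanar (G.deleteIncidenceSet v ⊔ edge u w) := by
  let p : G.Walk u w := .cons huv (.cons hvw .nil)
  refine (hG.torso_compl_union p.connected_induce_support p.start_mem_support
    p.end_mem_support).mono (sup_le_sup_right (fun x y hxy => ?_) _)
  rw [deleteIncidenceSet_adj] at hxy
  refine ⟨hxy.1, ?_, ?_⟩ <;> simp [p] <;> tauto

/-- In the separation with sides `S` and `Sᶜ ∪ {a, b}`, the torso of `S` is a forest with at most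
two additional edges. -/
lemma _root_.IsPlanar.sup_edge_of_piece [Finite V] (hG : IsPlanar G) (hS : (G.induce S).Connected)
    (haS : a ∈ S) (hbS : b ∈ S) (hexit : ∀ x ∈ S, ∀ y ∉ S, G.Adj x y → x = a ∨ x = b)
    {par : V → V} (hpar : ∀ x ∈ S, ∀ y ∈ S, G.Adj x y → par x = y ∨ par y = x)
    {x y : V} (hx : x ∈ S) (hy : y ∈ S) : IsPlanar (G ⊔ edge x y) := by
  have hsep : IsTwoSeparation (G ⊔ edge x y) S (Sᶜ ∪ {a, b}) a b := by
    refine ⟨by rw [Set.inter_union_distrib_left]; simp [Set.insert_subset_iff, haS, hbS],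
      by rw [← Set.union_assoc]; simp, ?_⟩
    rintro u v (huv | huv)
    · by_cases hu : u ∈ S <;> by_cases hv : v ∈ S
      · exact Or.inl ⟨hu, hv⟩
      · exact Or.inr ⟨Or.inr (hexit u hu v hv huv), Or.inl hv⟩
      · exact Or.inr ⟨Or.inl hu, Or.inr (hexit v hv u hu huv.symm)⟩
      · exact Or.inr ⟨Or.inl hu, Or.inl hv⟩
    · rcases (edge_adj _ _ _ _).1 huv with ⟨⟨rfl, rfl⟩ | ⟨rfl, rfl⟩, -⟩
      exacts [Or.inl ⟨hx, hy⟩, Or.inl ⟨hy, hx⟩]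
  refine hsep.isPlanar ?_ ((hG.torso_compl_union hS haS hbS).mono ?_)
  · refine isPlanar_of_functional (par := par) (E := {s(x, y), s(a, b)})
      ((Set.ncard_insert_le _ _).trans_eq (by simp)) fun u v huv => ?_
    rcases huv with ⟨huv | huv, hu, hv⟩ | huv
    · exact (hpar u hu v hv huv).imp_right Or.inl
    · exact Or.inr (Or.inr (Or.inl (edgeSet_edge_subset huv)))
    · exact Or.inr (Or.inr (Or.inr (edgeSet_edge_subset huv)))
  · rintro u v (⟨huv | huv, hu, hv⟩ | huv)
    · exact torso_adj_of_adj huv hu hv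
    · have huS : u ∈ S ∧ v ∈ S := by
        rcases (edge_adj _ _ _ _).1 huv with ⟨⟨rfl, rfl⟩ | ⟨rfl, rfl⟩, -⟩
        exacts [⟨hx, hy⟩, ⟨hy, hx⟩]
      have hu := hsep.eq_or_eq huS.1 hu
      have hv := hsep.eq_or_eq huS.2 hv
      have := huv.ne
      exact Or.inr ((edge_adj _ _ _ _).2 (by grind))
    · exact Or.inr huv

end Minor

/-! ### Rooted forests -/

/-- `par` is the parent map of a rooted forest on `V`, the roots being the fixed points; the
existence of a level function rules out cycles. -/
def IsParentMap {V : Type*} (par : V → V) : Prop :=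
  ∃ lev : V → ℕ, ∀ x, par x ≠ x → lev (par x) < lev x

/-- `y` is an ancestor of `x` (possibly `x` itself) in the forest with parent map `par`. -/
def IsAncestor {V : Type*} (par : V → V) (y x : V) : Prop := ∃ k, par^[k] x = y

/-- `par` is the parent map of a spanning forest of `G` with one root in each component. -/
structure IsSpanningForest {V : Type*} (G : SimpleGraph V) (par : V → V) : Prop where
  isParentMap : IsParentMap par
  adj : ∀ x, par x ≠ x → G.Adj x (par x)
  eq_of_reachable : ∀ r r', par r = r → par r' = r' → G.Reachable r r' → r = r'

/-- The parent map obtained by making the vertices in `C` roots. -/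
noncomputable def cutParent {V : Type*} (par : V → V) (C : Set V) (x : V) : V :=
  open Classical in if x ∈ C then x else par x

section Forest

variable {V : Type*} {G : SimpleGraph V} {par : V → V} {C : Set V} {x y z r : V}

lemma exists_isSpanningForest (G : SimpleGraph V) : ∃ par, IsSpanningForest G par := by
  let root (x : V) : V := (G.connectedComponentMk x).out
  have reachable_root x : G.Reachable x (root x) :=
    (ConnectedComponent.exact (Quot.out_eq (G.connectedComponentMk x))).symm
  have root_eq {x y} (h : G.Reachable x y) : root x = root y := by
    simp only [root, ConnectedComponent.sound h]
  have closer x (hx : x ≠ root x) : ∃ y, G.Adj x y ∧ G.dist y (root y) < G.dist x (root x) := by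
    obtain ⟨p, hp⟩ := (reachable_root x).exists_walk_length_eq_dist
    generalize hr : root x = r at p hp hx
    cases p with
    | nil => exact absurd rfl hx
    | @cons _ y _ hxy q =>
      refine ⟨y, hxy, ?_⟩
      rw [← root_eq hxy.reachable, hr, ← hp, Walk.length_cons]
      exact Nat.lt_succ_of_le (dist_le q)
  choose! next hnext using closer
  classical
  let par x := if x = root x then x else next x
  have par_of_ne {x} (hx : x ≠ root x) : par x = next x := if_neg hx
  have eq_root {x} (hx : par x = x) : x = root x := by
    by_contra h
    exact (hnext x h).1.ne' ((par_of_ne h).symm.trans hx)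
  have ne_root {x} (hx : par x ≠ x) : x ≠ root x := fun h => hx (if_pos h)
  refine ⟨par, ⟨fun x => G.dist x (root x), fun x hx => ?_⟩, fun x hx => ?_,
    fun r r' hr hr' h => ?_⟩
  · simpa only [par_of_ne (ne_root hx)] using (hnext x (ne_root hx)).2
  · simpa only [par_of_ne (ne_root hx)] using (hnext x (ne_root hx)).1
  · rw [eq_root hr, eq_root hr', root_eq h]

lemma IsAncestor.refl : IsAncestor par x x := ⟨0, rfl⟩

lemma IsAncestor.parent (h : IsAncestor par y x) : IsAncestor par (par y) x := by
  obtain ⟨k, rfl⟩ := h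
  exact ⟨k + 1, Function.iterate_succ_apply' ..⟩

lemma IsAncestor.of_parent (h : IsAncestor par y (par x)) : IsAncestor par y x := by
  obtain ⟨k, hk⟩ := h
  exact ⟨k + 1, hk⟩

lemma IsAncestor.trans (hzy : IsAncestor par z y) (hyx : IsAncestor par y x) :
    IsAncestor par z x := by
  obtain ⟨j, rfl⟩ := hzy
  obtain ⟨k, rfl⟩ := hyx
  exact ⟨j + k, Function.iterate_add_apply ..⟩

lemma IsAncestor.eq_or_exists_child (h : IsAncestor par y x) :
    y = x ∨ ∃ u, par u = y ∧ u ≠ y ∧ IsAncestor par u x := by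
  obtain ⟨k, rfl⟩ := h
  induction k with
  | zero => exact .inl rfl
  | succ k ih =>
    rw [Function.iterate_succ_apply']
    by_cases hfix : par (par^[k] x) = par^[k] x
    · rwa [hfix]
    · exact .inr ⟨_, rfl, Ne.symm hfix, k, rfl⟩

lemma IsParentMap.antisymm (h : IsParentMap par) (hxy : IsAncestor par x y)
    (hyx : IsAncestor par y x) : x = y := by
  obtain ⟨lev, hlev⟩ := h
  have lev_le {u v} (huv : IsAncestor par u v) : lev u ≤ lev v := by
    obtain ⟨k, rfl⟩ := huv
    induction k with
    | zero => rfl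
    | succ k ih =>
      rw [Function.iterate_succ_apply']
      by_cases hfix : par (par^[k] v) = par^[k] v
      · rwa [hfix]
      · exact (hlev _ hfix).le.trans ih
  rcases hxy.eq_or_exists_child with rfl | ⟨u, rfl, hu, huy⟩
  · rfl
  · have := hlev u hu.symm
    have := lev_le (huy.trans hyx)
    omega

lemma IsParentMap.exists_root (h : IsParentMap par) (x : V) :
    ∃ r, IsAncestor par r x ∧ par r = r := by
  obtain ⟨lev, hlev⟩ := h
  induction hl : lev x using Nat.strong_induction_on generalizing x with
  | _ l ih =>
    by_cases hx : par x = x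
    · exact ⟨x, .refl, hx⟩
    · obtain ⟨r, hr, hfix⟩ := ih _ (hl ▸ hlev x hx) (par x) rfl
      exact ⟨r, hr.of_parent, hfix⟩

/-- The root of the tree containing `x`. -/
noncomputable def IsParentMap.root (h : IsParentMap par) (x : V) : V := (h.exists_root x).choose

lemma IsParentMap.isAncestor_root (h : IsParentMap par) (x : V) : IsAncestor par (h.root x) x :=
  (h.exists_root x).choose_spec.1

lemma IsParentMap.parent_root (h : IsParentMap par) (x : V) : par (h.root x) = h.root x :=
  (h.exists_root x).choose_spec.2

lemma IsParentMap.root_eq_of_isAncestor (h : IsParentMap par) (hr : par r = r)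
    (hrx : IsAncestor par r x) : h.root x = r := by
  obtain ⟨j, hj⟩ := h.isAncestor_root x
  obtain ⟨k, hk⟩ := hrx
  calc h.root x = par^[k + j] x := by
        rw [Function.iterate_add_apply, hj, Function.iterate_fixed (h.parent_root x)]
    _ = r := by rw [add_comm, Function.iterate_add_apply, hk, Function.iterate_fixed hr]

lemma IsParentMap.root_parent (h : IsParentMap par) (x : V) : h.root (par x) = h.root x :=
  (h.root_eq_of_isAncestor (h.parent_root _) (h.isAncestor_root (par x)).of_parent).symm

lemma IsParentMap.connected_induce_fiber (h : IsParentMap par)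
    (hadj : ∀ x, par x ≠ x → G.Adj x (par x)) (z : V) :
    (G.induce {x | h.root x = h.root z}).Connected := by
  refine connected_induce_iff_forall_cut.2 ⟨⟨z, rfl⟩, fun P ⟨x, hx, hxP⟩ hP y hy => ?_⟩
  have mem_iff : ∀ k u, h.root u = h.root z → (par^[k] u ∈ P ↔ u ∈ P) := by
    intro k
    induction k with
    | zero => exact fun _ _ => Iff.rfl
    | succ k ih =>
      intro u hu
      have hpu := (h.root_parent u).trans hu
      rw [Function.iterate_succ_apply, ih _ hpu]
      by_cases hfix : par u = u
      · rw [hfix]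
      · exact ⟨hP _ hpu _ hu (hadj u hfix).symm, hP _ hu _ hpu (hadj u hfix)⟩
  have root_mem_iff u (hu : h.root u = h.root z) : h.root z ∈ P ↔ u ∈ P := by
    obtain ⟨k, hk⟩ := h.isAncestor_root u
    rw [← hu, ← hk]
    exact mem_iff k u hu
  exact (root_mem_iff y hy).1 ((root_mem_iff x hx).2 hxP)

lemma cutParent_of_mem (hx : x ∈ C) : cutParent par C x = x := if_pos hx

lemma cutParent_of_notMem (hx : x ∉ C) : cutParent par C x = par x := if_neg hx

lemma cutParent_ne_iff (hC : ∀ x, par x = x → x ∈ C) : cutParent par C x ≠ x ↔ x ∉ C := by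
  by_cases hx : x ∈ C
  · simp [cutParent_of_mem hx, hx]
  · rw [cutParent_of_notMem hx]
    exact iff_of_true (mt (hC x) hx) hx

lemma IsParentMap.cutParent (h : IsParentMap par) (C : Set V) :
    IsParentMap (cutParent par C) := by
  obtain ⟨lev, hlev⟩ := h
  refine ⟨lev, fun x hx => ?_⟩
  have hxC : x ∉ C := fun hxC => hx (cutParent_of_mem hxC)
  rw [cutParent_of_notMem hxC] at hx ⊢
  exact hlev x hx

lemma IsAncestor.of_cutParent (h : IsAncestor (cutParent par C) y x) : IsAncestor par y x := by
  obtain ⟨k, rfl⟩ := h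
  induction k with
  | zero => exact .refl
  | succ k ih =>
    rw [Function.iterate_succ_apply']
    by_cases hC : (PlanarTreeComponents.cutParent par C)^[k] x ∈ C
    · rwa [cutParent_of_mem hC]
    · rw [cutParent_of_notMem hC]
      exact ih.parent

lemma IsSpanningForest.ncard_nonforest_add_card_le [Finite V] (h : IsSpanningForest G par) :
    {e ∈ G.edgeSet | ∀ x, e ≠ s(x, par x)}.ncard + Nat.card V ≤
      edgeCount G + {x | par x = x}.ncard := by
  have forest : {x | par x = x}ᶜ.ncard ≤ {e ∈ G.edgeSet | ∃ x, e = s(x, par x)}.ncard := by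
    refine Set.ncard_le_ncard_of_injOn (fun x => s(x, par x)) (fun x hx => ⟨h.adj x hx, x, rfl⟩) ?_
    intro x _ y _ hxy
    rcases Sym2.eq_iff.1 hxy with hxy | hxy
    · exact hxy.1
    · exact h.isParentMap.antisymm ⟨1, hxy.1.symm⟩ ⟨1, hxy.2⟩
  have vertices := Set.ncard_add_ncard_compl {x | par x = x}
  have edges : {e ∈ G.edgeSet | ∃ x, e = s(x, par x)}.ncard +
      {e ∈ G.edgeSet | ∀ x, e ≠ s(x, par x)}.ncard = edgeCount G := by
    rw [edgeCount, ← Set.ncard_inter_add_ncard_sdiff_eq_ncard G.edgeSet {e | ∃ x, e = s(x, par x)}]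
    congr 2
    ext e
    simp
  omega

end Forest

/-! ### Cutting a spanning forest into pieces -/

section Pieces

variable {V : Type*} {G : SimpleGraph V} {par : V → V} {M : Set V} {x y v : V}

/-- The vertices with a descendant in `M`. -/
def ancestors (par : V → V) (M : Set V) : Set V := {x | ∃ μ ∈ M, IsAncestor par x μ}

/-- The branching vertices of the subforest spanned by the ancestors of `M`, and `M` itself. -/
def keyVertices (par : V → V) (M : Set V) : Set V :=
  M ∪ {x | ∃ y ∈ ancestors par M, ∃ z ∈ ancestors par M,
    y ≠ z ∧ par y = x ∧ par z = x ∧ y ≠ x ∧ z ≠ x}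

/-- The roots of the pieces: the forest is cut above these vertices, so that each piece contains
at most one key vertex. -/
def pieceRoots (par : V → V) (M : Set V) : Set V :=
  {x ∈ ancestors par M | par x ∈ keyVertices par M}

/-- The roots of the forest and the ends of the edges of `G` outside the forest. -/
def markedVertices (G : SimpleGraph V) (par : V → V) : Set V :=
  {x | par x = x ∨ ∃ y, G.Adj x y ∧ par x ≠ y ∧ par y ≠ x}

lemma subset_ancestors : M ⊆ ancestors par M := fun x hx => ⟨x, hx, .refl⟩

lemma parent_mem_ancestors (hx : x ∈ ancestors par M) : par x ∈ ancestors par M := by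
  obtain ⟨μ, hμ, h⟩ := hx
  exact ⟨μ, hμ, h.parent⟩

lemma subset_keyVertices : M ⊆ keyVertices par M := Set.subset_union_left

lemma keyVertices_subset_ancestors : keyVertices par M ⊆ ancestors par M :=
  Set.union_subset subset_ancestors fun _ ⟨_, hy, _, _, _, hyx, _⟩ => hyx ▸ parent_mem_ancestors hy

lemma mem_pieceRoots_of_root (hM : ∀ r, par r = r → r ∈ M) (hx : par x = x) :
    x ∈ pieceRoots par M := by
  refine ⟨subset_ancestors (hM x hx), ?_⟩
  rw [hx]
  exact subset_keyVertices (hM x hx)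

/-- The piece containing `x` is represented by its top vertex. -/
noncomputable def pieceRoot (h : IsParentMap par) (M : Set V) : V → V :=
  (h.cutParent (pieceRoots par M)).root

lemma pieceRoot_parent (h : IsParentMap par) (hx : x ∉ pieceRoots par M) :
    pieceRoot h M (par x) = pieceRoot h M x := by
  rw [pieceRoot, ← IsParentMap.root_parent _ x, cutParent_of_notMem hx]

lemma pieceRoot_of_mem (h : IsParentMap par) (hx : x ∈ pieceRoots par M) :
    pieceRoot h M x = x :=
  IsParentMap.root_eq_of_isAncestor _ (cutParent_of_mem hx) .refl

lemma pieceRoot_mem (h : IsParentMap par) (hM : ∀ r, par r = r → r ∈ M) (x : V) :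
    pieceRoot h M x ∈ pieceRoots par M := by
  by_contra hmem
  exact (cutParent_ne_iff fun _ => mem_pieceRoots_of_root hM).2 hmem (IsParentMap.parent_root _ x)

lemma isAncestor_of_mem_keyVertices (h : IsParentMap par) (hM : ∀ r, par r = r → r ∈ M)
    (hy : y ∈ keyVertices par M) (hv : v ∈ ancestors par M)
    (hroot : pieceRoot h M v = pieceRoot h M y) : IsAncestor par v y := by
  have upward : ∀ k v, v ∈ ancestors par M →
      IsAncestor par ((cutParent par (pieceRoots par M))^[k] v) y → IsAncestor par v y := by
    intro k
    induction k with
    | zero => exact fun _ _ => id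
    | succ k ih =>
      intro v hv hvy
      rw [Function.iterate_succ_apply] at hvy
      by_cases hcut : v ∈ pieceRoots par M
      · exact ih v hv (by rwa [cutParent_of_mem hcut] at hvy)
      rw [cutParent_of_notMem hcut] at hvy
      have not_key : par v ∉ keyVertices par M := fun hkey => hcut ⟨hv, hkey⟩
      rcases (ih _ (parent_mem_ancestors hv) hvy).eq_or_exists_child with rfl | ⟨u, huv, hu, huy⟩
      · exact absurd hy not_key
      obtain ⟨μ, hμ, hyμ⟩ := keyVertices_subset_ancestors hy
      by_contra hne
      refine not_key (.inr ⟨u, ⟨μ, hμ, huy.trans hyμ⟩, v, hv, ?_, huv, rfl, hu, ?_⟩)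
      · rintro rfl
        exact hne huy
      · exact fun hfix => hcut (mem_pieceRoots_of_root hM hfix.symm)
  obtain ⟨k, hk⟩ := (h.cutParent (pieceRoots par M)).isAncestor_root v
  refine upward k v hv (hk ▸ ?_)
  rw [show (h.cutParent _).root v = (h.cutParent _).root y from hroot]
  exact ((h.cutParent (pieceRoots par M)).isAncestor_root y).of_cutParent

lemma eq_of_mem_keyVertices (h : IsParentMap par) (hM : ∀ r, par r = r → r ∈ M)
    (hx : x ∈ keyVertices par M) (hy : y ∈ keyVertices par M)
    (hroot : pieceRoot h M x = pieceRoot h M y) : x = y :=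
  h.antisymm
    (isAncestor_of_mem_keyVertices h hM hy (keyVertices_subset_ancestors hx) hroot)
    (isAncestor_of_mem_keyVertices h hM hx (keyVertices_subset_ancestors hy) hroot.symm)

lemma parent_eq_or_parent_eq_of_pieceRoot_eq (h : IsParentMap par)
    (hxy : G.Adj x y) (hroot : pieceRoot h (markedVertices G par) x =
      pieceRoot h (markedVertices G par) y) : par x = y ∨ par y = x := by
  by_contra! hne
  exact hxy.ne (eq_of_mem_keyVertices h (fun _ hr => .inl hr)
    (subset_keyVertices (.inr ⟨y, hxy, hne⟩)) (subset_keyVertices (.inr ⟨x, hxy.symm, hne.symm⟩))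
    hroot)

lemma eq_pieceRoot_or_mem_keyVertices (h : IsParentMap par)
    (hxy : G.Adj x y) (hroot : pieceRoot h (markedVertices G par) x ≠
      pieceRoot h (markedVertices G par) y) :
    x = pieceRoot h (markedVertices G par) x ∨ x ∈ keyVertices par (markedVertices G par) := by
  by_cases hx : par x = y
  · refine .inl (pieceRoot_of_mem h (by_contra fun hcut => hroot ?_)).symm
    rw [← hx, pieceRoot_parent h hcut]
  by_cases hy : par y = x
  · refine .inr (by_contra fun hkey => hroot ?_)
    rw [← hy, pieceRoot_parent h fun hcut => hkey (hy ▸ hcut.2)]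
  · exact .inr (subset_keyVertices (.inr ⟨y, hxy, hx, hy⟩))

lemma IsSpanningForest.isPlanar_sup_edge [Finite V] (h : IsSpanningForest G par)
    (hG : IsPlanar G) (hroot : pieceRoot h.isParentMap (markedVertices G par) x =
      pieceRoot h.isParentMap (markedVertices G par) y) : IsPlanar (G ⊔ edge x y) := by
  set M := markedVertices G par
  have hM : ∀ r, par r = r → r ∈ M := fun r hr => .inl hr
  set p := pieceRoot h.isParentMap M
  obtain ⟨z, hz, hkey⟩ : ∃ z, p z = p x ∧ ∀ u ∈ keyVertices par M, p u = p x → u = z := by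
    by_cases hex : ∃ z ∈ keyVertices par M, p z = p x
    · obtain ⟨z, hz, hzx⟩ := hex
      exact ⟨z, hzx, fun u hu hux => eq_of_mem_keyVertices _ hM hu hz (hux.trans hzx.symm)⟩
    · exact ⟨x, rfl, fun u hu hux => absurd ⟨u, hu, hux⟩ hex⟩
  refine hG.sup_edge_of_piece (S := {u | p u = p x}) (a := p x) (b := z) (par := par)
    (IsParentMap.connected_induce_fiber _ (fun u hu => ?_) x)
    (pieceRoot_of_mem _ (pieceRoot_mem _ hM x)) hz
    (fun u (hu : p u = p x) w hw huw => ?_)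
    (fun u (hu : p u = p x) w (hw : p w = p x) huw =>
      parent_eq_or_parent_eq_of_pieceRoot_eq _ huw (hu.trans hw.symm))
    rfl hroot.symm
  · have hcut : u ∉ pieceRoots par M := fun hcut => hu (cutParent_of_mem hcut)
    rw [cutParent_of_notMem hcut] at hu ⊢
    exact h.adj u hu
  · exact (eq_pieceRoot_or_mem_keyVertices _ huw fun hp => hw (hp.symm.trans hu)).imp
      (fun h => h.trans hu) fun hk => hkey u hk hu

lemma ncard_pieceRoots_le_ncard_keyVertices [Finite V] :
    (pieceRoots par M).ncard ≤ (keyVertices par M).ncard := by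
  have child : ∀ x ∈ ancestors par M \ keyVertices par M, ∃ u ∈ ancestors par M, par u = x := by
    rintro x ⟨⟨μ, hμ, h⟩, hkey⟩
    rcases h.eq_or_exists_child with rfl | ⟨u, hux, -, hu⟩
    · exact absurd (subset_keyVertices hμ) hkey
    · exact ⟨u, ⟨μ, hμ, hu⟩, hux⟩
  choose! u hu hpar using child
  have hle : (ancestors par M \ keyVertices par M).ncard ≤
      (ancestors par M \ pieceRoots par M).ncard := by
    refine Set.ncard_le_ncard_of_injOn u (fun x hx => ⟨hu x hx, fun hcut => hx.2 ?_⟩)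
      fun x hx y hy hxy => ?_
    · exact hpar x hx ▸ hcut.2
    · rw [← hpar x hx, hxy, hpar y hy]
  have h₁ := Set.ncard_sdiff_add_ncard_of_subset
    (keyVertices_subset_ancestors (par := par) (M := M))
  have h₂ := Set.ncard_sdiff_add_ncard_of_subset (Set.sep_subset (ancestors par M)
    fun x => par x ∈ keyVertices par M)
  change (ancestors par M \ pieceRoots par M).ncard + (pieceRoots par M).ncard = _ at h₂
  omega

lemma two_mul_ncard_branching_le [Finite V] :
    2 * (keyVertices par M \ M).ncard ≤ (pieceRoots par M).ncard := by
  have children : ∀ x ∈ keyVertices par M \ M, ∃ y ∈ ancestors par M, ∃ z ∈ ancestors par M,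
      y ≠ z ∧ par y = x ∧ par z = x := by
    rintro x ⟨hx | ⟨y, hy, z, hz, hyz, hyx, hzx, -⟩, hxM⟩
    · exact absurd hx hxM
    · exact ⟨y, hy, z, hz, hyz, hyx, hzx⟩
  choose! y hy z hz hyz hyx hzx using children
  have y_inj : Set.InjOn y (keyVertices par M \ M) := fun a ha b hb hab => by
    rw [← hyx a ha, hab, hyx b hb]
  have z_inj : Set.InjOn z (keyVertices par M \ M) := fun a ha b hb hab => by
    rw [← hzx a ha, hab, hzx b hb]
  have disj : Disjoint (y '' (keyVertices par M \ M)) (z '' (keyVertices par M \ M)) := by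
    rw [Set.disjoint_left]
    rintro _ ⟨a, ha, rfl⟩ ⟨b, hb, hab⟩
    obtain rfl : a = b := by rw [← hyx a ha, ← hab, hzx b hb]
    exact hyz a ha hab.symm
  rw [two_mul]
  nth_rw 1 [← y_inj.ncard_image]
  rw [← z_inj.ncard_image, ← Set.ncard_union_eq disj]
  refine Set.ncard_le_ncard (Set.union_subset ?_ ?_)
  · rintro _ ⟨a, ha, rfl⟩
    exact ⟨hy a ha, (hyx a ha).symm ▸ ha.1⟩
  · rintro _ ⟨a, ha, rfl⟩
    exact ⟨hz a ha, (hzx a ha).symm ▸ ha.1⟩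

lemma ncard_pieceRoots_le [Finite V] : (pieceRoots par M).ncard ≤ 2 * M.ncard := by
  have h₁ := ncard_pieceRoots_le_ncard_keyVertices (par := par) (M := M)
  have h₂ := two_mul_ncard_branching_le (par := par) (M := M)
  have h₃ := Set.ncard_sdiff_add_ncard_of_subset (subset_keyVertices (par := par) (M := M))
  omega

lemma ncard_setOf_exists_mem_le [Finite V] (F : Set (Sym2 V)) :
    {x | ∃ e ∈ F, x ∈ e}.ncard ≤ 2 * F.ncard := by
  classical
  have := Fintype.ofFinite V
  have hcover : {x | ∃ e ∈ F, x ∈ e} = ↑(F.toFinite.toFinset.biUnion Sym2.toFinset) := by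
    ext x
    simp
  rw [hcover, Set.ncard_coe_finset, mul_comm, Set.ncard_eq_toFinset_card F]
  refine Finset.card_biUnion_le_card_mul _ _ _ fun e _ => ?_
  by_cases he : e.IsDiag
  · simp [Sym2.card_toFinset_of_isDiag e he]
  · exact (Sym2.card_toFinset_of_not_isDiag e he).le

lemma ncard_markedVertices_le [Finite V] :
    (markedVertices G par).ncard ≤
      {x | par x = x}.ncard + 2 * {e ∈ G.edgeSet | ∀ x, e ≠ s(x, par x)}.ncard := by
  refine (Set.ncard_le_ncard ?_).trans ((Set.ncard_union_le _ _).trans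
    (Nat.add_le_add_left (ncard_setOf_exists_mem_le _) _))
  rintro x (hx | ⟨y, hxy, hx, hy⟩)
  · exact .inl hx
  · refine .inr ⟨s(x, y), ⟨hxy, fun u hu => ?_⟩, Sym2.mem_mk_left x y⟩
    rcases Sym2.eq_iff.1 hu with ⟨rfl, rfl⟩ | ⟨rfl, rfl⟩
    · exact hx rfl
    · exact hy rfl

end Pieces

/-! ### Addable edges -/

section Addable

variable {V : Type*} {G : SimpleGraph V} {x y : V} {e : Sym2 V} {k n m : ℕ}

lemma mk_mem_addableSet :
    s(x, y) ∈ addableSet G ↔ x ≠ y ∧ ¬ G.Adj x y ∧ IsPlanar (G ⊔ edge x y) := by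
  simp only [addableSet, Set.mem_ofPred_eq, Sym2.mk_isDiag_iff, mem_edgeSet]
  rfl

lemma edgeCount_sup_of_mem_addableSet [Finite V] (he : e ∈ addableSet G) :
    edgeCount (G ⊔ fromEdgeSet {e}) = edgeCount G + 1 := by
  have hdiag : ({e} : Set (Sym2 V)) \ Sym2.diagSet = {e} := by
    simpa [sdiff_eq_left] using he.1
  rw [edgeCount, edgeSet_sup, edgeSet_fromEdgeSet, hdiag, Set.union_singleton,
    Set.ncard_insert_of_notMem he.2.1, edgeCount]

lemma ncard_le_two_mul_of_mk_mem [Finite V] {P : Set (V × V)} {T : Set (Sym2 V)}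
    (h : ∀ p ∈ P, s(p.1, p.2) ∈ T) : P.ncard ≤ 2 * T.ncard := by
  classical
  have := Fintype.ofFinite V
  rw [Set.ncard_eq_toFinset_card' P, Set.ncard_eq_toFinset_card' T]
  refine Finset.card_le_mul_card_image_of_maps_to (f := fun p : V × V => s(p.1, p.2))
    (fun p hp => by simpa using h p (by simpa using hp)) 2 fun b _ => ?_
  induction b using Sym2.inductionOn with
  | _ a b =>
    refine (Finset.card_le_card (t := {(a, b), (b, a)}) fun p hp => ?_).trans Finset.card_le_two
    simpa [Prod.ext_iff] using (Finset.mem_filter.1 hp).2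

lemma card_sq_le_ncard_range_mul {β : Type*} [Finite V] (f : V → β) :
    Nat.card V ^ 2 ≤ (Set.range f).ncard * {p : V × V | f p.1 = f p.2}.ncard := by
  classical
  have := Fintype.ofFinite V
  have hrange : (Set.range f).ncard = (Finset.univ.image f).card := by
    rw [← Set.ncard_coe_finset]
    simp
  have hcard : Nat.card V =
      ∑ b ∈ Finset.univ.image f, (Finset.univ.filter fun x => f x = b).card := by
    rw [Nat.card_eq_fintype_card, ← Finset.card_univ, Finset.card_eq_sum_card_image f]
  have hpairs : {p : V × V | f p.1 = f p.2}.ncard =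
      ∑ b ∈ Finset.univ.image f, (Finset.univ.filter fun x => f x = b).card ^ 2 := by
    rw [Set.ncard_eq_toFinset_card', Finset.card_eq_sum_card_fiberwise
      (f := fun p : V × V => f p.1) (t := Finset.univ.image f) (fun p _ => by simp)]
    refine Finset.sum_congr rfl fun b _ => ?_
    rw [sq, ← Finset.card_product]
    congr 1
    ext ⟨x, y⟩
    simp only [Finset.mem_filter, Set.mem_toFinset, Set.mem_ofPred_eq, Finset.mem_product,
      Finset.mem_univ, true_and]
    exact ⟨fun ⟨hxy, hx⟩ => ⟨hx, hxy ▸ hx⟩, fun ⟨hx, hy⟩ => ⟨hx.trans hy.symm, hx⟩⟩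
  rw [hrange, hpairs, hcard]
  exact sq_sum_le_card_mul_sum_sq

/-- `n` is large and `e ≤ (1 + δ) n`, with bounds depending on `k` under which every planar graph
with `n` vertices and `e` edges has at least `k n` addable edges. -/
structure IsSparse (k n e : ℕ) : Prop where
  le_card : 24 * k * (2 * k + 5) ≤ n
  edges_le : 8 * (2 * k + 5) * e ≤ (8 * (2 * k + 5) + 1) * n

lemma IsSparse.mono {j k n e e' : ℕ} (h : IsSparse k n e) (hj : j ≤ k) (he : e' ≤ e) :
    IsSparse j n e' := by
  refine ⟨le_trans (by gcongr) h.le_card, ?_⟩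
  rcases le_total e n with hen | hen
  · nlinarith
  · obtain ⟨d, rfl⟩ := Nat.exists_eq_add_of_le hen
    have := h.edges_le
    calc 8 * (2 * j + 5) * e' ≤ 8 * (2 * j + 5) * (n + d) := by gcongr
      _ = 8 * (2 * j + 5) * n + 8 * (2 * j + 5) * d := by ring
      _ ≤ 8 * (2 * j + 5) * n + 8 * (2 * k + 5) * d := by gcongr
      _ ≤ (8 * (2 * j + 5) + 1) * n := by linarith

lemma IsSparse.le_two_mul {k n e : ℕ} (h : IsSparse k n e) : e ≤ 2 * n := by
  have := h.edges_le
  by_contra!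
  nlinarith

lemma IsSparse.pos {k n e : ℕ} (h : IsSparse (k + 1) n e) : 0 < n :=
  lt_of_lt_of_le (by positivity) h.le_card

/-- Edges between different components are addable. -/
lemma IsSpanningForest.card_mul_ncard_roots_le [Finite V] {par : V → V}
    (h : IsSpanningForest G par) (hG : IsPlanar G) :
    Nat.card V * {r | par r = r}.ncard ≤ 2 * (addableSet G).ncard + Nat.card V := by
  have cross : {p : V × V | par p.2 = p.2 ∧ ¬ G.Reachable p.1 p.2}.ncard ≤
      2 * (addableSet G).ncard := by
    refine ncard_le_two_mul_of_mk_mem fun ⟨x, r⟩ ⟨_, hxr⟩ => mk_mem_addableSet.2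
      ⟨?_, fun hadj => hxr hadj.reachable, hG.sup_edge_of_not_reachable hxr⟩
    exact fun heq => hxr (heq ▸ .rfl)
  have own : {p : V × V | par p.2 = p.2 ∧ G.Reachable p.1 p.2}.ncard ≤ Nat.card V := by
    rw [← Set.ncard_univ]
    refine Set.ncard_le_ncard_of_injOn Prod.fst (fun _ _ => trivial) ?_
    rintro ⟨x, r⟩ ⟨hr, hxr⟩ ⟨_, r'⟩ ⟨hr', hxr'⟩ rfl
    exact Prod.ext rfl (h.eq_of_reachable r r' hr hr' (hxr.symm.trans hxr'))
  rw [← Set.ncard_univ, ← Set.ncard_prod, Set.ncard_univ]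
  refine (Set.ncard_le_ncard fun p hp => ?_).trans
    ((Set.ncard_union_le _ _).trans (add_le_add cross own))
  by_cases hr : G.Reachable p.1 p.2
  · exact .inr ⟨hp.2, hr⟩
  · exact .inl ⟨hp.2, hr⟩

lemma IsSpanningForest.ncard_pieceRoot_eq_le [Finite V] {par : V → V}
    (h : IsSpanningForest G par) (hG : IsPlanar G) :
    {p : V × V | pieceRoot h.isParentMap (markedVertices G par) p.1 =
      pieceRoot h.isParentMap (markedVertices G par) p.2}.ncard ≤
      Nat.card V + (2 * edgeCount G + 2 * (addableSet G).ncard) := by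
  set P := {p : V × V | pieceRoot h.isParentMap (markedVertices G par) p.1 =
      pieceRoot h.isParentMap (markedVertices G par) p.2}
  have diagonal : (Set.range fun x : V => (x, x)).ncard ≤ Nat.card V := by
    rw [← Set.image_univ, ← Set.ncard_univ]
    exact Set.ncard_image_le
  have adjacent : {p : V × V | G.Adj p.1 p.2}.ncard ≤ 2 * edgeCount G :=
    ncard_le_two_mul_of_mk_mem fun _ hp => hp
  have others : {p ∈ P | p.1 ≠ p.2 ∧ ¬ G.Adj p.1 p.2}.ncard ≤ 2 * (addableSet G).ncard :=
    ncard_le_two_mul_of_mk_mem fun _ hp =>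
      mk_mem_addableSet.2 ⟨hp.2.1, hp.2.2, h.isPlanar_sup_edge hG hp.1⟩
  refine (Set.ncard_le_ncard fun p hp => ?_).trans ((Set.ncard_union_le _ _).trans
    (add_le_add diagonal ((Set.ncard_union_le _ _).trans (add_le_add adjacent others))))
  by_cases hdiag : p.1 = p.2
  · exact .inl ⟨p.1, Prod.ext rfl hdiag⟩
  by_cases hadj : G.Adj p.1 p.2
  · exact .inr (.inl hadj)
  · exact .inr (.inr ⟨hp, hdiag, hadj⟩)

lemma IsSpanningForest.ncard_range_pieceRoot_add_le [Finite V] {par : V → V}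
    (h : IsSpanningForest G par) :
    (Set.range (pieceRoot h.isParentMap (markedVertices G par))).ncard + 4 * Nat.card V ≤
      6 * {r | par r = r}.ncard + 4 * edgeCount G := by
  have range_le : (Set.range (pieceRoot h.isParentMap (markedVertices G par))).ncard ≤
      (pieceRoots par (markedVertices G par)).ncard := by
    refine Set.ncard_le_ncard ?_
    rintro _ ⟨x, rfl⟩
    exact pieceRoot_mem _ (fun _ hr => .inl hr) x
  have := ncard_pieceRoots_le (par := par) (M := markedVertices G par)
  have := ncard_markedVertices_le (G := G) (par := par)
  have := h.ncard_nonforest_add_card_le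
  omega

/-- Either there are many components, or the graph is close to a tree and has few pieces, so that
by Cauchy–Schwarz many pairs lie in a common piece. -/
lemma IsSparse.mul_le_ncard_addableSet [Finite V] (hk : IsSparse k (Nat.card V) (edgeCount G))
    (hG : IsPlanar G) : k * Nat.card V ≤ (addableSet G).ncard := by
  obtain ⟨par, h⟩ := exists_isSpanningForest G
  have between := h.card_mul_ncard_roots_le hG
  have few_pieces := h.ncard_range_pieceRoot_add_le
  have inside := h.ncard_pieceRoot_eq_le hG
  have cauchy := card_sq_le_ncard_range_mul (pieceRoot h.isParentMap (markedVertices G par))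
  have edges := hk.le_two_mul
  obtain ⟨large, sparse⟩ := hk
  generalize Nat.card V = n at *
  generalize edgeCount G = e at *
  generalize {r | par r = r}.ncard = r at *
  generalize (Set.range (pieceRoot h.isParentMap (markedVertices G par))).ncard = L at *
  rcases lt_or_ge (2 * k) r with hr | hr
  · nlinarith
  have hL : L * (2 * k + 5) ≤ n := by nlinarith
  have pairs : n * ((2 * k + 5) * n) ≤ n * (n + (2 * e + 2 * (addableSet G).ncard)) := by
    calc n * ((2 * k + 5) * n) = n ^ 2 * (2 * k + 5) := by ring
      _ ≤ L * (n + (2 * e + 2 * (addableSet G).ncard)) * (2 * k + 5) := by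
        gcongr
        exact cauchy.trans (by gcongr)
      _ = L * (2 * k + 5) * (n + (2 * e + 2 * (addableSet G).ncard)) := by ring
      _ ≤ _ := by gcongr
  rcases n.eq_zero_or_pos with rfl | hn
  · simp
  · have := Nat.le_of_mul_le_mul_left pairs hn
    nlinarith

lemma IsSparse.mul_le_ncard_addableSet_avoiding [Finite V] {t : ℕ} {T : Finset V}
    (hk : IsSparse (k + t) (Nat.card V) (edgeCount G)) (hG : IsPlanar G) (hT : T.card ≤ t) :
    k * Nat.card V ≤ {e ∈ addableSet G | ∀ v ∈ T, v ∉ e}.ncard := by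
  have touching : ((fun p : V × V => s(p.1, p.2)) '' ((T : Set V) ×ˢ Set.univ)).ncard ≤
      t * Nat.card V := by
    refine (Set.ncard_image_le).trans ?_
    rw [Set.ncard_prod, Set.ncard_coe_finset, Set.ncard_univ]
    gcongr
  have cover : (addableSet G).ncard ≤ {e ∈ addableSet G | ∀ v ∈ T, v ∉ e}.ncard +
      t * Nat.card V := by
    refine (Set.ncard_le_ncard fun e he => ?_).trans
      ((Set.ncard_union_le _ _).trans (Nat.add_le_add_left touching _))
    by_cases hav : ∀ v ∈ T, v ∉ e
    · exact .inl ⟨he, hav⟩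
    · push Not at hav
      obtain ⟨v, hv, w, rfl⟩ := hav
      exact .inr ⟨(v, w), ⟨hv, trivial⟩, rfl⟩
  have := hk.mul_le_ncard_addableSet hG
  rw [add_mul] at this
  omega

lemma IsSparse.planarSet_nonempty (h : IsSparse 1 n m) : (planarSet n m).Nonempty := by
  suffices ∀ e ≤ m, (planarSet n e).Nonempty from this m le_rfl
  intro e
  induction e with
  | zero => exact fun _ => ⟨⊥, isPlanar_bot, by simp [edgeCount]⟩
  | succ e ih =>
    intro he
    obtain ⟨G, hG, rfl⟩ := ih (by omega)
    have hsparse : IsSparse 1 (Nat.card (Fin n)) (edgeCount G) := by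
      simpa using h.mono le_rfl (by omega)
    have many := hsparse.mul_le_ncard_addableSet hG
    have := hsparse.le_card
    obtain ⟨f, hf⟩ := Set.nonempty_of_ncard_ne_zero
      (s := addableSet G) (by omega)
    exact ⟨_, hf.2.2, edgeCount_sup_of_mem_addableSet hf⟩

end Addable

/-! ### Components under local changes -/

section Components

variable {V : Type*} {G G' : SimpleGraph V} {W W' : Finset V} {v : V}

lemma _root_.IsComponent.subset_of_mem (hW : IsComponent G W) (hW' : IsComponent G W') (hv : v ∈ W)
    (hv' : v ∈ W') : W ⊆ W' :=
  (connected_induce_iff_forall_cut.1 hW.1).2 W' ⟨v, hv, hv'⟩ fun y _ z _ hyz hy => hW'.2 y hy z hyz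

lemma _root_.IsComponent.eq_of_mem (hW : IsComponent G W) (hW' : IsComponent G W') (hv : v ∈ W)
    (hv' : v ∈ W') : W = W' :=
  (hW.subset_of_mem hW' hv hv').antisymm (hW'.subset_of_mem hW hv' hv)

lemma ncard_components_meeting_le [Finite V] (T : Finset V) :
    {W | IsComponent G W ∧ ∃ v ∈ T, v ∈ W}.ncard ≤ T.card := by
  rw [← Set.ncard_coe_finset]
  have meets : ∀ W : {W | IsComponent G W ∧ ∃ v ∈ T, v ∈ W}, ∃ v ∈ T, v ∈ W.1 := fun W => W.2.2
  choose f hfT hfW using meets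
  rw [← Nat.card_coe_set_eq, ← Nat.card_coe_set_eq]
  refine Nat.card_le_card_of_injective (fun W => (⟨f W, hfT W⟩ : (T : Set V))) fun W W' hWW' => ?_
  have hfeq : f W = f W' := congrArg Subtype.val hWW'
  exact Subtype.ext (W.2.1.eq_of_mem W'.2.1 (hfW W) (hfeq ▸ hfW W'))

lemma _root_.IsComponent.of_forall_adj_iff (h : ∀ v ∈ W, ∀ u, G.Adj v u ↔ G'.Adj v u)
    (hW : IsComponent G' W) : IsComponent G W := by
  have hinduce : G.induce (W : Set V) = G'.induce (W : Set V) := by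
    ext ⟨x, hx⟩ ⟨y, hy⟩
    exact h x hx y
  exact ⟨hinduce ▸ hW.1, fun v hv u hvu => hW.2 v hv u ((h v hv u).1 hvu)⟩

lemma _root_.IsOrderCopy.of_forall_adj_iff {h n : ℕ} {H : SimpleGraph (Fin h)}
    {G G' : SimpleGraph (Fin n)} {W : Finset (Fin n)} (hadj : ∀ v ∈ W, ∀ u, G.Adj v u ↔ G'.Adj v u)
    (hW : IsOrderCopy H G' W) : IsOrderCopy H G W :=
  ⟨hW.1, fun i j => (hW.2 i j).trans (hadj _ (W.orderIsoOfFin hW.1 i).2 _).symm⟩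

lemma numOrderComponents_le_add_card {h n : ℕ} (H : SimpleGraph (Fin h))
    {G G' : SimpleGraph (Fin n)} (T : Finset (Fin n))
    (hT : ∀ v ∉ T, ∀ u, G.Adj v u ↔ G'.Adj v u) :
    numOrderComponents H G' ≤ numOrderComponents H G + T.card := by
  refine (Set.ncard_le_ncard ?_).trans ((Set.ncard_union_le _ _).trans
    (Nat.add_le_add_left (ncard_components_meeting_le (G := G') T) _))
  rintro W ⟨hW, hcopy⟩
  by_cases hWT : ∃ v ∈ T, v ∈ W
  · exact .inr ⟨hW, hWT⟩
  · have hadj : ∀ v ∈ W, ∀ u, G.Adj v u ↔ G'.Adj v u := fun v hv =>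
      hT v fun hvT => hWT ⟨v, hvT, hv⟩
    exact .inl ⟨.of_forall_adj_iff hadj hW, .of_forall_adj_iff hadj hcopy⟩

end Components

/-! ### Adding and deleting edges -/

section Switching

lemma mul_ncard_le_mul_ncard_of_relation {α β : Type*} [Finite α] [Finite β] {S : Set α}
    {B : Set β} (r : α → β → Prop) {c M N : ℕ} (hS : ∀ a ∈ S, M ≤ c * {b ∈ B | r a b}.ncard)
    (hB : ∀ b ∈ B, {a ∈ S | r a b}.ncard ≤ N) : M * S.ncard ≤ c * N * B.ncard := by
  classical
  have := Fintype.ofFinite α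
  have := Fintype.ofFinite β
  have above a : {b ∈ B | r a b}.ncard = (B.toFinset.bipartiteAbove r a).card := by
    rw [Set.ncard_eq_toFinset_card']
    congr 1
    ext
    simp
  have below b : {a ∈ S | r a b}.ncard = (S.toFinset.bipartiteBelow r b).card := by
    rw [Set.ncard_eq_toFinset_card']
    congr 1
    ext
    simp
  simp only [above] at hS
  simp only [below] at hB
  rw [Set.ncard_eq_toFinset_card' S, Set.ncard_eq_toFinset_card' B]
  calc M * S.toFinset.card = ∑ _a ∈ S.toFinset, M := by simp [mul_comm]
    _ ≤ ∑ a ∈ S.toFinset, c * (B.toFinset.bipartiteAbove r a).card :=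
      Finset.sum_le_sum fun a ha => hS a (by simpa using ha)
    _ = c * ∑ b ∈ B.toFinset, (S.toFinset.bipartiteBelow r b).card := by
      rw [← Finset.mul_sum, Finset.sum_card_bipartiteAbove_eq_sum_card_bipartiteBelow]
    _ ≤ c * ∑ _b ∈ B.toFinset, N :=
      Nat.mul_le_mul_left _ (Finset.sum_le_sum fun b hb => hB b (by simpa using hb))
    _ = c * N * B.toFinset.card := by
      simp
      ring

/-- `G'` arises from `G` by deleting one edge. -/
def IsEdgeDeletion {V : Type*} (G' G : SimpleGraph V) : Prop :=
  ∃ e ∈ G.edgeSet, G' = G.deleteEdges {e}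

section EdgeDeletion

variable {V : Type*} {G G' : SimpleGraph V} {e : Sym2 V}

lemma IsEdgeDeletion.le (h : IsEdgeDeletion G' G) : G' ≤ G := by
  obtain ⟨e, -, rfl⟩ := h
  exact deleteEdges_le _

lemma isEdgeDeletion_sup_of_mem_addableSet (he : e ∈ addableSet G) :
    IsEdgeDeletion G (G ⊔ fromEdgeSet {e}) := by
  refine ⟨e, by simpa [edgeSet_sup] using .inr he.1, ?_⟩
  rw [deleteEdges_sup, deleteEdges_fromEdgeSet, sdiff_self, Set.bot_eq_empty, fromEdgeSet_empty,
    sup_bot_eq, (deleteEdges_eq_self).2 (Set.disjoint_singleton_right.2 he.2.1)]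

lemma IsEdgeDeletion.edgeCount_add_one [Finite V] (h : IsEdgeDeletion G' G) :
    edgeCount G' + 1 = edgeCount G := by
  obtain ⟨e, he, rfl⟩ := h
  rw [edgeCount, edgeSet_deleteEdges, Set.ncard_sdiff_singleton_add_one he, edgeCount]

lemma IsEdgeDeletion.exists_forall_adj_iff (h : IsEdgeDeletion G' G) :
    ∃ T : Finset V, T.card = 2 ∧ ∀ v ∉ T, ∀ u, G'.Adj v u ↔ G.Adj v u := by
  classical
  obtain ⟨e, he, rfl⟩ := h
  refine ⟨e.toFinset, Sym2.card_toFinset_of_not_isDiag e (G.not_isDiag_of_mem_edgeSet he),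
    fun v hv u => ?_⟩
  rw [deleteEdges_adj, Set.mem_singleton_iff, and_iff_left]
  rintro rfl
  simp at hv

lemma ncard_edgeDeletions (G : SimpleGraph V) :
    {G' | IsEdgeDeletion G' G}.ncard = edgeCount G := by
  have himage : {G' | IsEdgeDeletion G' G} = (fun e => G.deleteEdges {e}) '' G.edgeSet := by
    ext G'
    exact exists_congr fun e => and_congr_right fun _ => eq_comm
  rw [himage, Set.InjOn.ncard_image, edgeCount]
  intro e he f _ hef
  by_contra hne
  have : e ∈ (G.deleteEdges {f}).edgeSet := by
    simpa [edgeSet_deleteEdges] using ⟨he, hne⟩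
  rw [← show G.deleteEdges {e} = G.deleteEdges {f} from hef] at this
  simp [edgeSet_deleteEdges] at this

lemma ncard_edgeAdditions_le [Finite V] (G' : SimpleGraph V) :
    {G | IsEdgeDeletion G' G}.ncard ≤ Nat.card V ^ 2 := by
  have hcover : {G | IsEdgeDeletion G' G} ⊆
      (fun p : V × V => G' ⊔ edge p.1 p.2) '' Set.univ := by
    rintro G ⟨e, he, rfl⟩
    induction e using Sym2.inductionOn with
    | _ x y =>
      refine ⟨(x, y), trivial, ?_⟩
      exact sdiff_sup_cancel ((edge_le_iff G).2 (.inr he))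
  refine (Set.ncard_le_ncard hcover).trans ((Set.ncard_image_le).trans ?_)
  rw [Set.ncard_univ, Nat.card_prod, sq]

end EdgeDeletion

lemma mul_ncard_le_mul_ncard_of_fst_relation {α β γ : Type*} [Finite α] [Finite β] [Finite γ]
    {S : Set (α × γ)} {B : Set (β × γ)} (R : α → β → Prop) {M N : ℕ}
    (hS : ∀ x i, (x, i) ∈ S → M ≤ {y | (y, i) ∈ B ∧ R x y}.ncard)
    (hB : ∀ y i, (y, i) ∈ B → {x | R x y}.ncard ≤ N) : M * S.ncard ≤ N * B.ncard := by
  rw [← one_mul N]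
  refine mul_ncard_le_mul_ncard_of_relation (fun a b => b.2 = a.2 ∧ R a.1 b.1) ?_ ?_
  · rintro ⟨x, i⟩ hx
    rw [one_mul]
    refine (hS x i hx).trans (Set.ncard_le_ncard_of_injOn (fun y => (y, i)) ?_ ?_)
    · exact fun y hy => ⟨hy.1, rfl, hy.2⟩
    · exact fun y _ y' _ hyy' => congrArg Prod.fst hyy'
  · rintro ⟨y, i⟩ hy
    refine le_trans (Set.ncard_le_ncard_of_injOn Prod.fst ?_ ?_) (hB y i hy)
    · exact fun a ha => ha.2.2
    · exact fun a ha a' ha' haa' => Prod.ext haa' (ha.2.1.symm.trans ha'.2.1)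

/-- Pairs of a planar graph with `e` edges having fewer than `X` components that are
order-preserving copies of `H`, and a set of `i` of its isolated vertices. -/
structure IsRarePair {h n : ℕ} (H : SimpleGraph (Fin h)) (e i X : ℕ) (G : SimpleGraph (Fin n))
    (I : Finset (Fin n)) : Prop where
  isPlanar : IsPlanar G
  edgeCount_eq : edgeCount G = e
  card_eq : I.card = i
  isolated : ∀ v ∈ I, ∀ u, ¬ G.Adj v u
  numOrderComponents_lt : numOrderComponents H G < X

/-- The set of all `IsRarePair`s on `n` vertices. -/
def rarePairs {h : ℕ} (H : SimpleGraph (Fin h)) (n e i X : ℕ) :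
    Set (SimpleGraph (Fin n) × Finset (Fin n)) :=
  {a | IsRarePair H e i X a.1 a.2}

section RarePairs

variable {h n e i X : ℕ} {H : SimpleGraph (Fin h)} {G G' : SimpleGraph (Fin n)}
  {I : Finset (Fin n)}

lemma IsRarePair.of_forall_adj_iff (hG : IsRarePair H e i X G I) {e' i' : ℕ} {I' : Finset (Fin n)}
    {d : ℕ} {T : Finset (Fin n)} (hTd : T.card ≤ d) (hT : ∀ v ∉ T, ∀ u, G.Adj v u ↔ G'.Adj v u)
    (hG' : IsPlanar G') (he' : edgeCount G' = e') (hi' : I'.card = i')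
    (hI' : ∀ v ∈ I', ∀ u, ¬ G'.Adj v u) : IsRarePair H e' i' (X + d) G' I' :=
  ⟨hG', he', hi', hI', (numOrderComponents_le_add_card H T hT).trans_lt
    (Nat.add_lt_add_of_lt_of_le hG.numOrderComponents_lt hTd)⟩

lemma IsRarePair.mono (hG : IsRarePair H e i X G I) {Y : ℕ} (hXY : X ≤ Y) :
    IsRarePair H e i Y G I :=
  { hG with numOrderComponents_lt := hG.numOrderComponents_lt.trans_le hXY }

lemma IsRarePair.sup_fromEdgeSet (hG : IsRarePair H e i X G I) {f : Sym2 (Fin n)}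
    (hf : f ∈ addableSet G) (hfI : ∀ v ∈ I, v ∉ f) :
    IsRarePair H (e + 1) i (X + 2) (G ⊔ fromEdgeSet {f}) I := by
  obtain ⟨T, hT, hadj⟩ := (isEdgeDeletion_sup_of_mem_addableSet hf).exists_forall_adj_iff
  refine hG.of_forall_adj_iff hT.le hadj hf.2.2
    (by rw [edgeCount_sup_of_mem_addableSet hf, hG.edgeCount_eq]) hG.card_eq fun v hv u => ?_
  rw [sup_adj, fromEdgeSet_adj]
  rintro (hvu | ⟨rfl, -⟩)
  · exact hG.isolated v hv u hvu
  · exact hfI v hv (Sym2.mem_mk_left _ _)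

lemma IsRarePair.of_isEdgeDeletion (hG : IsRarePair H (e + 1) i X G I) (h : IsEdgeDeletion G' G) :
    IsRarePair H e i (X + 2) G' I := by
  obtain ⟨T, hT, hadj⟩ := h.exists_forall_adj_iff
  refine hG.of_forall_adj_iff hT.le (fun v hv u => (hadj v hv u).symm)
    (hG.isPlanar.mono h.le) ?_ hG.card_eq fun v hv u hvu => hG.isolated v hv u (h.le hvu)
  have := h.edgeCount_add_one
  have := hG.edgeCount_eq
  lia

lemma mul_ncard_rarePairs_le_edge_add {k : ℕ} (hk : IsSparse (k + i) n e) :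
    k * n * (rarePairs H n e i X).ncard ≤ (e + 1) * (rarePairs H n (e + 1) i (X + 2)).ncard := by
  refine mul_ncard_le_mul_ncard_of_fst_relation IsEdgeDeletion ?_ ?_
  · intro G I hG
    have hsparse : IsSparse (k + i) (Nat.card (Fin n)) (edgeCount G) := by
      rwa [Nat.card_fin, hG.edgeCount_eq]
    have hmany := hsparse.mul_le_ncard_addableSet_avoiding hG.isPlanar hG.card_eq.le
    rw [Nat.card_fin] at hmany
    refine hmany.trans (Set.ncard_le_ncard_of_injOn (fun f => G ⊔ fromEdgeSet {f}) ?_ ?_)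
    · exact fun f hf =>
        ⟨hG.sup_fromEdgeSet hf.1 hf.2, isEdgeDeletion_sup_of_mem_addableSet hf.1⟩
    · intro f hf f' _ hff'
      have : f ∈ (G ⊔ fromEdgeSet {f'}).edgeSet := by
        rw [← show G ⊔ fromEdgeSet {f} = G ⊔ fromEdgeSet {f'} from hff']
        simpa [edgeSet_sup] using .inr hf.1.1
      simp only [edgeSet_sup, edgeSet_fromEdgeSet] at this
      exact this.elim (fun h => absurd h hf.1.2.1) fun h => h.1
  · intro G I hG
    rw [ncard_edgeDeletions, hG.edgeCount_eq]

lemma mul_ncard_rarePairs_le_edge_delete :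
    (e + 1) * (rarePairs H n (e + 1) i X).ncard ≤ n ^ 2 * (rarePairs H n e i (X + 2)).ncard := by
  refine mul_ncard_le_mul_ncard_of_fst_relation (fun G G' => IsEdgeDeletion G' G) ?_ ?_
  · intro G I hG
    rw [← hG.edgeCount_eq, ← ncard_edgeDeletions]
    exact Set.ncard_le_ncard fun G' hG' => ⟨hG.of_isEdgeDeletion hG', hG'⟩
  · intro G' _ _
    simpa using ncard_edgeAdditions_le G'

end RarePairs
end Switching

/-! ### Isolating vertices -/

section Degrees

variable {V : Type*} (G : SimpleGraph V) (v : V)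

lemma sum_vertexDegree [Fintype V] : ∑ v, vertexDegree G v = 2 * edgeCount G := by
  classical
  rw [edgeCount, ← coe_edgeFinset, Set.ncard_coe_finset, ← G.sum_degrees_eq_twice_card_edges]
  refine Finset.sum_congr rfl fun v _ => ?_
  rw [vertexDegree, ← Nat.card_coe_set_eq, Nat.card_eq_fintype_card, card_neighborSet_eq_degree]

lemma edgeCount_deleteIncidenceSet_add_vertexDegree [Finite V] :
    edgeCount (G.deleteIncidenceSet v) + vertexDegree G v = edgeCount G := by
  classical
  have hdegree : vertexDegree G v = (G.incidenceSet v).ncard := by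
    rw [vertexDegree, ← Nat.card_coe_set_eq, ← Nat.card_coe_set_eq,
      Nat.card_congr (G.incidenceSetEquivNeighborSet v)]
  rw [hdegree, edgeCount, edgeSet_deleteIncidenceSet, edgeCount,
    Set.ncard_sdiff_add_ncard_of_subset (G.incidenceSet_subset v)]

lemma three_mul_card_le [Finite V] :
    3 * Nat.card V ≤ 2 * edgeCount G + 3 * {v | vertexDegree G v = 0}.ncard +
      2 * {v | vertexDegree G v = 1}.ncard + {v | vertexDegree G v = 2}.ncard := by
  classical
  have := Fintype.ofFinite V
  calc 3 * Nat.card V = ∑ _v : V, 3 := by simp [mul_comm]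
    _ ≤ ∑ v, (vertexDegree G v + 3 * (if vertexDegree G v = 0 then 1 else 0) +
          2 * (if vertexDegree G v = 1 then 1 else 0) +
          (if vertexDegree G v = 2 then 1 else 0)) :=
      Finset.sum_le_sum fun v _ => by grind
    _ = _ := by
      simp only [Finset.sum_add_distrib, ← Finset.mul_sum, ← Finset.card_filter,
        sum_vertexDegree, Set.ncard_eq_toFinset_card', Set.toFinset_ofPred]

/-- The edges joining `v` to the vertices in `N`. -/
def star (v : V) (N : Set V) : SimpleGraph V :=
  fromEdgeSet ((s(v, ·)) '' N)

variable {G v}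

lemma star_adj {N : Set V} {x y : V} :
    (star v N).Adj x y ↔ (x = v ∧ y ∈ N ∨ y = v ∧ x ∈ N) ∧ x ≠ y := by
  simp only [star, fromEdgeSet_adj, Set.mem_image, Sym2.eq_iff]
  grind

lemma deleteIncidenceSet_sup_star : G.deleteIncidenceSet v ⊔ star v (G.neighborSet v) = G := by
  ext x y
  have := G.adj_comm x y
  have : G.Adj x y → x ≠ y := Adj.ne
  simp only [sup_adj, deleteIncidenceSet_adj, star_adj, mem_neighborSet]
  grind

lemma exists_sup_edge_and_eq_sup_star {u w : V} (huw : u ≠ w) (hN : G.neighborSet v = {u, w}) :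
    ∃ f ∈ (G.deleteIncidenceSet v ⊔ edge u w).edgeSet,
      G = G.deleteIncidenceSet v ⊔ edge u w ⊔ star v f ∨
        G = (G.deleteIncidenceSet v ⊔ edge u w).deleteEdges {f} ⊔ star v f := by
  refine ⟨s(u, w), by simp [huw], ?_⟩
  have hG : G.deleteIncidenceSet v ⊔ star v ↑s(u, w) = G := by
    rw [Sym2.coe_mk, ← hN, deleteIncidenceSet_sup_star]
  by_cases hadj : (G.deleteIncidenceSet v).Adj u w
  · exact .inl (by rw [sup_edge_of_adj _ hadj, hG])
  · refine .inr ?_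
    rw [deleteEdges_sup, deleteEdges_edge (s := {s(u, w)}) rfl, sup_bot_eq,
      deleteEdges_eq_self.2 (Set.disjoint_singleton_right.2 hadj), hG]

end Degrees

section Isolating

lemma mul_ncard_le_mul_ncard_of_insert {V α β : Type*} [Finite V] [DecidableEq V] [Finite α]
    [Finite β] {S : Set (α × Finset V)} {B : Set (β × Finset V)} (R : V → β → α → Prop)
    {c j M N : ℕ}
    (hS : ∀ x I, (x, I) ∈ S → M ≤ c * {v | v ∉ I ∧ ∃ y, (y, insert v I) ∈ B ∧ R v y x}.ncard)
    (hj : ∀ y J, (y, J) ∈ B → J.card ≤ j)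
    (hN : ∀ y J, (y, J) ∈ B → ∀ v, {x | R v y x}.ncard ≤ N) :
    M * S.ncard ≤ c * (j * N) * B.ncard := by
  refine mul_ncard_le_mul_ncard_of_relation
    (fun a b => ∃ v ∈ b.2, v ∉ a.2 ∧ b.2 = insert v a.2 ∧ R v b.1 a.1) ?_ ?_
  · rintro ⟨x, I⟩ hx
    refine (hS x I hx).trans (Nat.mul_le_mul_left _ ?_)
    choose y hyB hyR using fun v : {v | v ∉ I ∧ ∃ y, (y, insert v I) ∈ B ∧ R v y x} => v.2.2
    rw [← Nat.card_coe_set_eq, ← Nat.card_coe_set_eq]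
    refine Nat.card_le_card_of_injective (fun v => ⟨(y v, insert v.1 I), hyB v, v.1,
      Finset.mem_insert_self v.1 I, v.2.1, rfl, hyR v⟩) fun v w hvw => ?_
    exact Subtype.ext ((Finset.insert_inj v.2.1).1 (congrArg (fun b => b.1.2) hvw))
  · rintro ⟨y, J⟩ hy
    have hcover : {a ∈ S | ∃ v ∈ J, v ∉ a.2 ∧ J = insert v a.2 ∧ R v y a.1} ⊆
        ⋃ v ∈ J, (fun x => (x, J.erase v)) '' {x | R v y x} := by
      rintro ⟨x, I⟩ ⟨-, v, hvJ, hvI, rfl, hR⟩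
      exact Set.mem_biUnion hvJ ⟨x, hR, by rw [Finset.erase_insert hvI]⟩
    calc _ ≤ ∑ v ∈ J, ((fun x => (x, J.erase v)) '' {x | R v y x}).ncard :=
          (Set.ncard_le_ncard hcover).trans (Finset.set_ncard_biUnion_le _ _)
      _ ≤ J.card * N := Finset.sum_le_card_nsmul _ _ _ fun v _ =>
          (Set.ncard_image_le).trans (hN y J hy v)
      _ ≤ j * N := Nat.mul_le_mul_right _ (hj y J hy)

/-- The rare pairs for which a tenth of the vertices are unmarked and of degree `d`. -/
def rarePairsOfDegree {h : ℕ} (H : SimpleGraph (Fin h)) (n e i X d : ℕ) :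
    Set (SimpleGraph (Fin n) × Finset (Fin n)) :=
  {a ∈ rarePairs H n e i X | n ≤ 10 * {v | v ∉ a.2 ∧ vertexDegree a.1 v = d}.ncard}

variable {h n e i X : ℕ} {H : SimpleGraph (Fin h)} {G G' : SimpleGraph (Fin n)}
  {I : Finset (Fin n)} {v u w : Fin n}

lemma IsRarePair.insert_of_vertexDegree_eq_zero (hG : IsRarePair H e i X G I) (hv : v ∉ I)
    (h0 : vertexDegree G v = 0) : IsRarePair H e (i + 1) X G (insert v I) := by
  have hempty : G.neighborSet v = ∅ := (Set.ncard_eq_zero).1 h0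
  refine { hG with
    card_eq := by rw [Finset.card_insert_of_notMem hv, hG.card_eq]
    isolated := fun x hx u hxu => ?_ }
  rcases Finset.mem_insert.1 hx with rfl | hx
  · exact hempty.subset hxu
  · exact hG.isolated x hx u hxu

lemma IsRarePair.deleteIncidenceSet (hG : IsRarePair H (e + 1) i X G I) (hv : v ∉ I)
    (hu : G.neighborSet v = {u}) :
    IsRarePair H e (i + 1) (X + 2) (G.deleteIncidenceSet v) (insert v I) := by
  refine hG.of_forall_adj_iff (T := {v, u}) Finset.card_le_two (fun x hx y => ?_)
    (hG.isPlanar.mono (G.deleteIncidenceSet_le v)) ?_ (by rw [Finset.card_insert_of_notMem hv,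
      hG.card_eq]) fun x hx y => ?_
  · simp only [Finset.mem_insert, Finset.mem_singleton, not_or] at hx
    have : G.Adj v x → x = u := fun h => hu.subset h
    have := G.adj_comm x y
    grind [deleteIncidenceSet_adj]
  · have := edgeCount_deleteIncidenceSet_add_vertexDegree G v
    rw [vertexDegree, hu, Set.ncard_singleton, hG.edgeCount_eq] at this
    lia
  · have := hG.isolated x
    grind [deleteIncidenceSet_adj]

lemma IsRarePair.deleteIncidenceSet_sup_edge (hG : IsRarePair H (e + 1) i X G I) (hv : v ∉ I)
    (huw : u ≠ w) (hN : G.neighborSet v = {u, w}) :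
    ∃ e', (e' = e ∨ e' = e - 1) ∧
      IsRarePair H e' (i + 1) (X + 3) (G.deleteIncidenceSet v ⊔ edge u w) (insert v I) := by
  have hvx x : G.Adj v x ↔ x = u ∨ x = w := Set.ext_iff.1 hN x
  have hplanar : IsPlanar (G.deleteIncidenceSet v ⊔ edge u w) :=
    hG.isPlanar.deleteIncidenceSet_sup_edge ((hvx u).2 (.inl rfl)).symm ((hvx w).2 (.inr rfl))
  have hcount := edgeCount_deleteIncidenceSet_add_vertexDegree G v
  rw [vertexDegree, hN, Set.ncard_pair huw, hG.edgeCount_eq] at hcount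
  refine ⟨_, ?_, hG.of_forall_adj_iff (T := {v, u, w}) Finset.card_le_three (fun x hx y => ?_)
    hplanar rfl (by rw [Finset.card_insert_of_notMem hv, hG.card_eq]) fun x hx y => ?_⟩
  · by_cases hadj : (G.deleteIncidenceSet v).Adj u w
    · rw [sup_edge_of_adj _ hadj]
      lia
    · have := edgeCount_sup_of_mem_addableSet (mk_mem_addableSet.2 ⟨huw, hadj, hplanar⟩)
      rw [← edge] at this
      lia
  · have := G.adj_comm x y
    grind [deleteIncidenceSet_adj]
  · have := hG.isolated x
    have := hG.isolated u
    have := hG.isolated w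
    have := (hvx x).2
    have := G.adj_comm v x
    have : v ≠ u := ((hvx u).2 (.inl rfl)).ne
    have : v ≠ w := ((hvx w).2 (.inr rfl)).ne
    grind [deleteIncidenceSet_adj]

lemma mul_ncard_rarePairsOfDegree_zero_le :
    n * (rarePairsOfDegree H n e i X 0).ncard ≤
      10 * (i + 1) * (rarePairs H n e (i + 1) X).ncard := by
  nth_rw 1 [← mul_one (i + 1)]
  refine mul_ncard_le_mul_ncard_of_insert (fun _ G' G => G = G') (fun G I hG => ?_)
    (fun G I hG => hG.card_eq.le) fun G _ _ _ => by simp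
  exact hG.2.trans (Nat.mul_le_mul_left _ (Set.ncard_le_ncard fun v hv =>
    ⟨hv.1, G, hG.1.insert_of_vertexDegree_eq_zero hv.1 hv.2, rfl⟩))

lemma ncard_rarePairsOfDegree_one_le (hn : 0 < n) :
    (rarePairsOfDegree H n (e + 1) i X 1).ncard ≤
      10 * (i + 1) * (rarePairs H n e (i + 1) (X + 2)).ncard := by
  suffices n * (rarePairsOfDegree H n (e + 1) i X 1).ncard ≤
      10 * ((i + 1) * n) * (rarePairs H n e (i + 1) (X + 2)).ncard from
    Nat.le_of_mul_le_mul_left (this.trans_eq (by ring)) hn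
  refine mul_ncard_le_mul_ncard_of_insert (fun v G' G => ∃ u, G = G' ⊔ star v {u})
    (fun G I hG => ?_) (fun G I hG => hG.card_eq.le) fun G' _ _ v => ?_
  · refine hG.2.trans (Nat.mul_le_mul_left _ (Set.ncard_le_ncard fun v hv => ?_))
    obtain ⟨u, hu⟩ := Set.ncard_eq_one.1 hv.2
    exact ⟨hv.1, _, hG.1.deleteIncidenceSet hv.1 hu, u, hu ▸ deleteIncidenceSet_sup_star.symm⟩
  · have himage : {G | ∃ u, G = G' ⊔ star v {u}} = (fun u => G' ⊔ star v {u}) '' Set.univ := by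
      ext
      simp [eq_comm]
    rw [himage]
    exact (Set.ncard_image_le).trans_eq (by simp)

lemma ncard_rarePairs_mono {Y : ℕ} (hXY : X ≤ Y) :
    (rarePairs H n e i X).ncard ≤ (rarePairs H n e i Y).ncard :=
  Set.ncard_le_ncard fun _ ha => IsRarePair.mono ha hXY

lemma ncard_rarePairs_union_le (hk : IsSparse (i + 2) n e) :
    (rarePairs H n e (i + 1) X ∪ rarePairs H n (e - 1) (i + 1) X).ncard ≤
      3 * (rarePairs H n e (i + 1) (X + 2)).ncard := by
  have hsame : (rarePairs H n e (i + 1) X).ncard ≤ (rarePairs H n e (i + 1) (X + 2)).ncard :=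
    ncard_rarePairs_mono (Nat.le_add_right _ _)
  have hpred : (rarePairs H n (e - 1) (i + 1) X).ncard ≤
      2 * (rarePairs H n e (i + 1) (X + 2)).ncard := by
    rcases e with _ | e
    · exact hsame.trans (Nat.le_mul_of_pos_left _ two_pos)
    · have hfill := mul_ncard_rarePairs_le_edge_add (H := H) (X := X) (k := 1) (i := i + 1)
        (hk.mono (by lia) e.le_succ)
      refine Nat.le_of_mul_le_mul_left (c := n) ?_ hk.pos
      calc _ ≤ (e + 1) * (rarePairs H n (e + 1) (i + 1) (X + 2)).ncard := by simpa using hfill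
        _ ≤ 2 * n * (rarePairs H n (e + 1) (i + 1) (X + 2)).ncard :=
          Nat.mul_le_mul_right _ hk.le_two_mul
        _ = _ := by ring
  exact (Set.ncard_union_le _ _).trans (by lia)

lemma ncard_rarePairsOfDegree_two_le (hk : IsSparse (i + 2) n e) :
    (rarePairsOfDegree H n (e + 1) i X 2).ncard ≤
      120 * (i + 1) * (rarePairs H n e (i + 1) (X + 5)).ncard := by
  suffices n * (rarePairsOfDegree H n (e + 1) i X 2).ncard ≤ 10 * ((i + 1) * (4 * n)) *
      (rarePairs H n e (i + 1) (X + 3) ∪ rarePairs H n (e - 1) (i + 1) (X + 3)).ncard from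
    Nat.le_of_mul_le_mul_left (this.trans ((Nat.mul_le_mul_left _
      (ncard_rarePairs_union_le hk)).trans_eq (by ring))) hk.pos
  refine mul_ncard_le_mul_ncard_of_insert (fun v G' G =>
    ∃ f : Sym2 (Fin n), f ∈ G'.edgeSet ∧ (G = G' ⊔ star v f ∨ G = G'.deleteEdges {f} ⊔ star v f))
    (fun G I hG => ?_) ?_ fun G' J hG' v => ?_
  · refine hG.2.trans (Nat.mul_le_mul_left _ (Set.ncard_le_ncard fun v hv => ?_))
    obtain ⟨u, w, huw, hN⟩ := Set.ncard_eq_two.1 hv.2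
    obtain ⟨e', he' | he', hrare⟩ := hG.1.deleteIncidenceSet_sup_edge hv.1 huw hN
    · exact ⟨hv.1, _, .inl (he' ▸ hrare), exists_sup_edge_and_eq_sup_star huw hN⟩
    · exact ⟨hv.1, _, .inr (he' ▸ hrare), exists_sup_edge_and_eq_sup_star huw hN⟩
  · rintro G' J (hG' | hG') <;> exact hG'.card_eq.le
  · have hedges : edgeCount G' ≤ 2 * n := by
      have := hk.le_two_mul
      rcases hG' with hG' | hG' <;> have := hG'.edgeCount_eq <;> lia
    have hcover : {G | ∃ f ∈ G'.edgeSet, G = G' ⊔ star v f ∨ G = G'.deleteEdges {f} ⊔ star v f} ⊆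
        (fun f : Sym2 (Fin n) => G' ⊔ star v f) '' G'.edgeSet ∪
          (fun f : Sym2 (Fin n) => G'.deleteEdges {f} ⊔ star v f) '' G'.edgeSet := by
      rintro G ⟨f, hf, rfl | rfl⟩
      exacts [.inl ⟨f, hf, rfl⟩, .inr ⟨f, hf, rfl⟩]
    calc _ ≤ edgeCount G' + edgeCount G' := (Set.ncard_le_ncard hcover).trans
          ((Set.ncard_union_le _ _).trans
            (Nat.add_le_add (Set.ncard_image_le) (Set.ncard_image_le)))
      _ ≤ 4 * n := by lia

lemma rarePairs_subset_union_rarePairsOfDegree (hk : IsSparse (i + 1) n e) :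
    rarePairs H n e i X ⊆ rarePairsOfDegree H n e i X 0 ∪ rarePairsOfDegree H n e i X 1 ∪
      rarePairsOfDegree H n e i X 2 := by
  rintro ⟨G, I⟩ hG
  have hdegrees := three_mul_card_le G
  rw [Nat.card_fin, hG.edgeCount_eq] at hdegrees
  have hunmarked d : {v | vertexDegree G v = d}.ncard ≤
      {v | v ∉ I ∧ vertexDegree G v = d}.ncard + i := by
    rw [← hG.card_eq, ← Set.ncard_coe_finset]
    refine (Set.ncard_le_ncard fun v hv => ?_).trans (Set.ncard_union_le _ _)
    by_cases hvI : v ∈ I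
    exacts [.inr hvI, .inl ⟨hvI, hv⟩]
  have h0 := hunmarked 0
  have h1 := hunmarked 1
  have h2 := hunmarked 2
  have := hk.le_card
  have := hk.edges_le
  by_contra hnot
  simp only [Set.mem_union, rarePairsOfDegree, Set.mem_ofPred_eq, not_or, not_and, not_le] at hnot
  have := hnot.1.1 hG
  have := hnot.1.2 hG
  have := hnot.2 hG
  nlinarith

lemma ncard_rarePairsOfDegree_zero_le {q : ℕ} (hn : 0 < n) (hq : n ≤ q * (e + 1)) :
    (rarePairsOfDegree H n (e + 1) i X 0).ncard ≤
      10 * q * (i + 1) * (rarePairs H n e (i + 1) (X + 2)).ncard := by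
  refine Nat.le_of_mul_le_mul_left (c := n ^ 2) ?_ (by positivity)
  calc n ^ 2 * (rarePairsOfDegree H n (e + 1) i X 0).ncard
    _ = n * (n * (rarePairsOfDegree H n (e + 1) i X 0).ncard) := by ring
    _ ≤ q * (e + 1) * (10 * (i + 1) * (rarePairs H n (e + 1) (i + 1) X).ncard) :=
      Nat.mul_le_mul hq mul_ncard_rarePairsOfDegree_zero_le
    _ = 10 * q * (i + 1) * ((e + 1) * (rarePairs H n (e + 1) (i + 1) X).ncard) := by ring
    _ ≤ 10 * q * (i + 1) * (n ^ 2 * (rarePairs H n e (i + 1) (X + 2)).ncard) :=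
      Nat.mul_le_mul_left _ mul_ncard_rarePairs_le_edge_delete
    _ = _ := by ring

lemma ncard_rarePairs_succ_le {q : ℕ} (hk : IsSparse (i + 2) n (e + 1)) (hq : n ≤ q * (e + 1)) :
    (rarePairs H n (e + 1) i X).ncard ≤
      10 * (q + 13) * (i + 1) * (rarePairs H n e (i + 1) (X + 5)).ncard := by
  set N := (rarePairs H n e (i + 1) (X + 5)).ncard
  have hmono : (rarePairs H n e (i + 1) (X + 2)).ncard ≤ N := ncard_rarePairs_mono (by lia)
  calc _ ≤ (rarePairsOfDegree H n (e + 1) i X 0).ncard +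
        (rarePairsOfDegree H n (e + 1) i X 1).ncard +
        (rarePairsOfDegree H n (e + 1) i X 2).ncard :=
      (Set.ncard_le_ncard (rarePairs_subset_union_rarePairsOfDegree
        (hk.mono (by lia) le_rfl))).trans ((Set.ncard_union_le _ _).trans
          (Nat.add_le_add_right (Set.ncard_union_le _ _) _))
    _ ≤ 10 * q * (i + 1) * N + 10 * (i + 1) * N + 120 * (i + 1) * N := by
      refine Nat.add_le_add (Nat.add_le_add ?_ ?_) ?_
      · exact (ncard_rarePairsOfDegree_zero_le hk.pos hq).trans (Nat.mul_le_mul_left _ hmono)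
      · exact (ncard_rarePairsOfDegree_one_le hk.pos).trans (Nat.mul_le_mul_left _ hmono)
      · exact ncard_rarePairsOfDegree_two_le (hk.mono le_rfl e.le_succ)
    _ = _ := by ring

lemma ncard_rarePairs_le_pow_mul {q : ℕ} (j : ℕ) (hk : IsSparse (i + j + 1) n (e + j))
    (hq : n ≤ q * (e + 1)) :
    (rarePairs H n (e + j) i X).ncard ≤
      (10 * (q + 13) * (i + j)) ^ j * (rarePairs H n e (i + j) (X + 5 * j)).ncard := by
  induction j generalizing i X with
  | zero => simp
  | succ j ih =>
    calc _ ≤ 10 * (q + 13) * (i + 1) * (rarePairs H n (e + j) (i + 1) (X + 5)).ncard :=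
          ncard_rarePairs_succ_le (hk.mono (by lia) le_rfl)
            (hq.trans (Nat.mul_le_mul_left _ (by lia)))
      _ ≤ 10 * (q + 13) * (i + (j + 1)) * ((10 * (q + 13) * (i + 1 + j)) ^ j *
            (rarePairs H n e (i + 1 + j) (X + 5 + 5 * j)).ncard) :=
          Nat.mul_le_mul (Nat.mul_le_mul_left _ (by lia)) (ih (hk.mono (by lia) (by lia)))
      _ = _ := by
          rw [show i + 1 + j = i + (j + 1) by ring, show X + 5 + 5 * j = X + 5 * (j + 1) by ring]
          ring

end Isolating

/-! ### Planting a tree on isolated vertices -/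

section Planting

lemma edgeCount_add_one_of_isTree {V : Type*} [Finite V] {T : SimpleGraph V} (hT : T.IsTree) :
    edgeCount T + 1 = Nat.card V := by
  classical
  have := Fintype.ofFinite V
  rw [edgeCount, ← coe_edgeFinset, Set.ncard_coe_finset, hT.card_edgeFinset,
    Nat.card_eq_fintype_card]

lemma exists_parent_of_isTree {V : Type*} [Finite V] {T : SimpleGraph V} (hT : T.IsTree) :
    ∃ par : V → V, ∀ x y, T.Adj x y → par x = y ∨ par y = x := by
  obtain ⟨par, hpar⟩ := exists_isSpanningForest T
  refine ⟨par, fun x y hxy => ?_⟩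
  have hroots : {x | par x = x}.ncard ≤ 1 := (Set.ncard_le_one).2 fun r hr r' hr' =>
    hpar.eq_of_reachable r r' hr hr' (hT.connected.preconnected r r')
  have hcount := hpar.ncard_nonforest_add_card_le
  have hedges := edgeCount_add_one_of_isTree hT
  have hforest : {e ∈ T.edgeSet | ∀ x, e ≠ s(x, par x)} = ∅ :=
    (Set.ncard_eq_zero).1 (by lia)
  by_contra! hne
  refine Set.eq_empty_iff_forall_notMem.1 hforest s(x, y) ⟨hxy, fun z hz => ?_⟩
  rcases Sym2.eq_iff.1 hz with ⟨rfl, hy⟩ | ⟨hx, rfl⟩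
  exacts [hne.1 hy.symm, hne.2 hx.symm]

variable {h n e X k : ℕ} {H : SimpleGraph (Fin h)} {G : SimpleGraph (Fin n)}
  {I : Finset (Fin n)}

/-- The order-preserving copy of `H` on the vertex set `I`, with no further edges. -/
def copyOn (H : SimpleGraph (Fin h)) (hI : I.card = h) : SimpleGraph (Fin n) :=
  H.map (I.orderEmbOfFin hI).toEmbedding

lemma support_copyOn_subset (hI : I.card = h) : (copyOn H hI).support ⊆ I := by
  rintro x ⟨y, hxy⟩
  obtain ⟨i, j, -, rfl, rfl⟩ := (map_adj _ _ _ _).1 hxy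
  exact I.orderEmbOfFin_mem hI i

lemma edgeCount_copyOn (hI : I.card = h) : edgeCount (copyOn H hI) = edgeCount H := by
  rw [edgeCount, copyOn, edgeSet_map]
  exact Set.ncard_image_of_injective _ (Function.Embedding.sym2Map _).injective

lemma isPlanar_copyOn (hH : H.IsTree) (hI : I.card = h) : IsPlanar (copyOn H hI) := by
  obtain ⟨par, hpar⟩ := exists_parent_of_isTree hH
  let f := I.orderEmbOfFin hI
  refine isPlanar_of_functional (par := Function.extend f (f ∘ par) id) (E := ∅) (by simp)
    fun x y hxy => ?_
  obtain ⟨i, j, hij, rfl, rfl⟩ := (map_adj _ _ _ _).1 hxy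
  change Function.extend f (f ∘ par) id (f i) = f j ∨ Function.extend f (f ∘ par) id (f j) = f i ∨ _
  rw [f.injective.extend_apply, f.injective.extend_apply]
  exact (hpar i j hij).imp (congrArg f) fun hj => .inl (congrArg f hj)

lemma isOrderCopy_copyOn (hI : I.card = h) : IsOrderCopy H (copyOn H hI) I :=
  ⟨hI, fun _ _ => (map_adj_apply (f := (I.orderEmbOfFin hI).toEmbedding)).symm⟩

lemma isComponent_copyOn (hH : H.IsTree) (hI : I.card = h) : IsComponent (copyOn H hI) I := by
  obtain ⟨hI', hcopy⟩ := isOrderCopy_copyOn (H := H) hI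
  let φ : H ≃g (copyOn H hI).induce (I : Set (Fin n)) :=
    { toEquiv := (I.orderIsoOfFin hI').toEquiv
      map_rel_iff' := fun {i j} => (hcopy i j).symm }
  exact ⟨φ.connected_iff.1 hH.connected, fun v _ u hvu =>
    support_copyOn_subset hI ⟨v, hvu.symm⟩⟩

lemma disjoint_copyOn (hG : ∀ v ∈ I, ∀ u, ¬ G.Adj v u) (hI : I.card = h) :
    Disjoint G (copyOn H hI) :=
  disjoint_left.2 fun v u hvu hcopy => hG v (support_copyOn_subset hI ⟨u, hcopy⟩) u hvu

lemma IsRarePair.sup_copyOn (hG : IsRarePair H e h X G I) (hH : H.IsTree) :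
    IsRarePair H (e + edgeCount H) 0 (X + h) (G ⊔ copyOn H hG.card_eq) ∅ := by
  refine hG.of_forall_adj_iff hG.card_eq.le (fun v hv u => ?_) ?_ ?_ rfl (by simp)
  · exact (or_iff_left fun hvu => hv (support_copyOn_subset hG.card_eq ⟨u, hvu⟩)).symm
  · obtain ⟨a⟩ := hH.connected.nonempty
    refine hG.isPlanar.sup_of_support_inter_subset (a := I.orderEmbOfFin hG.card_eq a)
      (isPlanar_copyOn hH hG.card_eq) ?_
    rintro v ⟨⟨u, hvu⟩, hv⟩
    exact absurd hvu (hG.isolated v (support_copyOn_subset hG.card_eq hv) u)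
  · rw [edgeCount, edgeSet_sup, Set.ncard_union_eq
      (disjoint_edgeSet.2 (disjoint_copyOn hG.isolated hG.card_eq)), ← edgeCount, ← edgeCount,
      hG.edgeCount_eq, edgeCount_copyOn]

lemma ncard_rarePairs_le_mul_planted (hH : H.IsTree) :
    (rarePairs H n e h X).ncard ≤
      (X + h) * (rarePairs H n (e + edgeCount H) 0 (X + h)).ncard := by
  suffices hcount : 1 * (rarePairs H n e h X).ncard ≤
      1 * (X + h) * (rarePairs H n (e + edgeCount H) 0 (X + h)).ncard by simpa using hcount
  refine mul_ncard_le_mul_ncard_of_relation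
    (fun a b => ∃ hI : a.2.card = h, b = (a.1 ⊔ copyOn H hI, ∅)) ?_ ?_
  · rintro ⟨G, I⟩ hG
    rw [one_mul]
    exact (Set.ncard_pos).2 ⟨_, hG.sup_copyOn hH, hG.card_eq, rfl⟩
  · rintro ⟨G', J⟩ hG'
    refine le_trans ?_ hG'.numOrderComponents_lt.le
    refine Set.ncard_le_ncard_of_injOn Prod.snd ?_ ?_
    · rintro ⟨G, I⟩ ⟨hG, hI, hGG'⟩
      obtain rfl : G' = G ⊔ copyOn H hI := congrArg Prod.fst hGG'
      have hadj v (hv : v ∈ I) u : (G ⊔ copyOn H hI).Adj v u ↔ (copyOn H hI).Adj v u :=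
        or_iff_right (hG.isolated v hv u)
      exact ⟨.of_forall_adj_iff hadj (isComponent_copyOn hH hI),
        .of_forall_adj_iff hadj (isOrderCopy_copyOn hI)⟩
    · rintro ⟨G₁, I⟩ ⟨hG₁, hI, h₁⟩ ⟨G₂, _⟩ ⟨hG₂, _, h₂⟩ rfl
      have heq : G₁ ⊔ copyOn H hI = G₂ ⊔ copyOn H hI := congrArg Prod.fst (h₁.symm.trans h₂)
      refine congrArg (·, I) (?_ : G₁ = G₂)
      have hdisj₁ : Disjoint G₁ (copyOn H hI) := disjoint_copyOn hG₁.isolated hI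
      have hdisj₂ : Disjoint G₂ (copyOn H hI) := disjoint_copyOn hG₂.isolated hI
      rw [← hdisj₁.sup_sdiff_cancel_right, heq, hdisj₂.sup_sdiff_cancel_right]

lemma ncard_rarePairs_zero_le : (rarePairs H n e 0 X).ncard ≤ (planarSet n e).ncard := by
  refine Set.ncard_le_ncard_of_injOn Prod.fst (fun a ha => ⟨ha.isPlanar, ha.edgeCount_eq⟩) ?_
  intro a ha b hb hab
  exact Prod.ext hab
    ((Finset.card_eq_zero.1 ha.card_eq).trans (Finset.card_eq_zero.1 hb.card_eq).symm)

lemma mul_ncard_rarePairs_le_ncard_planarSet (hH : H.IsTree) (hk : IsSparse k n (e + h)) :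
    k * n * (rarePairs H n e h X).ncard ≤
      (X + h) * (e + h) * (planarSet n (e + h)).ncard := by
  have hedges : e + h = e + edgeCount H + 1 := by
    rw [add_assoc, edgeCount_add_one_of_isTree hH, Nat.card_fin]
  rw [hedges] at hk ⊢
  calc _ ≤ k * n * ((X + h) * (rarePairs H n (e + edgeCount H) 0 (X + h)).ncard) :=
        Nat.mul_le_mul_left _ (ncard_rarePairs_le_mul_planted hH)
    _ = (X + h) * (k * n * (rarePairs H n (e + edgeCount H) 0 (X + h)).ncard) := by ring
    _ ≤ (X + h) * ((e + edgeCount H + 1) *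
          (rarePairs H n (e + edgeCount H + 1) 0 (X + h + 2)).ncard) :=
        Nat.mul_le_mul_left _ (mul_ncard_rarePairs_le_edge_add (hk.mono le_rfl (Nat.le_succ _)))
    _ ≤ (X + h) * ((e + edgeCount H + 1) * (planarSet n (e + edgeCount H + 1)).ncard) :=
        Nat.mul_le_mul_left _ (Nat.mul_le_mul_left _ ncard_rarePairs_zero_le)
    _ = _ := by ring

lemma mul_ncard_planarSet_lt_le {q t : ℕ} (hH : H.IsTree) (hk : IsSparse (k + h + 1) n (e + h))
    (hq : n ≤ q * (e + 1)) :
    k * {G ∈ planarSet n (e + h) | ¬ t ≤ numOrderComponents H G}.ncard ≤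
      (10 * (q + 13) * h) ^ h * (t + 6 * h) * 2 * (planarSet n (e + h)).ncard := by
  set P := (planarSet n (e + h)).ncard
  set C := (10 * (q + 13) * h) ^ h
  have hbad : {G ∈ planarSet n (e + h) | ¬ t ≤ numOrderComponents H G}.ncard ≤
      (rarePairs H n (e + h) 0 t).ncard :=
    Set.ncard_le_ncard_of_injOn (fun G => (G, ∅))
      (fun G hG => ⟨hG.1.1, hG.1.2, rfl, by simp, not_le.1 hG.2⟩)
      fun G _ G' _ hGG' => congrArg Prod.fst hGG'
  have hisolate : (rarePairs H n (e + h) 0 t).ncard ≤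
      C * (rarePairs H n e h (t + 5 * h)).ncard := by
    simpa [C] using ncard_rarePairs_le_pow_mul (i := 0) h (hk.mono (by lia) le_rfl) hq
  refine Nat.le_of_mul_le_mul_left (c := n) ?_ hk.pos
  calc _ ≤ n * (k * (C * (rarePairs H n e h (t + 5 * h)).ncard)) :=
        Nat.mul_le_mul_left _ (Nat.mul_le_mul_left _ (hbad.trans hisolate))
    _ = C * (k * n * (rarePairs H n e h (t + 5 * h)).ncard) := by ring
    _ ≤ C * ((t + 5 * h + h) * (e + h) * P) := Nat.mul_le_mul_left _
        (mul_ncard_rarePairs_le_ncard_planarSet hH (hk.mono (by lia) le_rfl))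
    _ ≤ C * ((t + 5 * h + h) * (2 * n) * P) := by gcongr; exact hk.le_two_mul
    _ = _ := by ring

end Planting

/-! ### Passing to the limit -/

section Limit

lemma planarProb_eq_one_sub {n m : ℕ} {P : SimpleGraph (Fin n) → Prop}
    (hne : (planarSet n m).Nonempty) : planarProb n m P = 1 - planarProb n m fun G => ¬ P G := by
  have htotal : ((planarSet n m).ncard : ℝ) ≠ 0 := by exact_mod_cast ((Set.ncard_pos).2 hne).ne'
  have hsplit : {G ∈ planarSet n m | P G}.ncard + {G ∈ planarSet n m | ¬ P G}.ncard =
      (planarSet n m).ncard := by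
    rw [← Set.ncard_inter_add_ncard_sdiff_eq_ncard (planarSet n m) {G | P G}]
    rfl
  rw [eq_sub_iff_add_eq, planarProb, planarProb, ← add_div, div_eq_one_iff_eq htotal]
  exact_mod_cast hsplit

lemma tendsto_planarProb_one {m : ℕ → ℕ} {P : ∀ n, SimpleGraph (Fin n) → Prop} (C : ℕ)
    (hne : ∀ᶠ n in atTop, (planarSet n (m n)).Nonempty)
    (hbad : ∀ k, ∀ᶠ n in atTop,
      k * {G ∈ planarSet n (m n) | ¬ P n G}.ncard ≤ C * (planarSet n (m n)).ncard) :
    Tendsto (fun n => planarProb n (m n) (P n)) atTop (nhds 1) := by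
  refine Metric.tendsto_nhds.2 fun ε hε => ?_
  obtain ⟨k, hk⟩ := exists_nat_gt (C / ε)
  have hkpos : (0 : ℝ) < k := (by positivity : 0 ≤ C / ε).trans_lt hk
  filter_upwards [hne, hbad k] with n hne hbad
  have htotal : (0 : ℝ) < (planarSet n (m n)).ncard := by exact_mod_cast (Set.ncard_pos).2 hne
  rw [planarProb_eq_one_sub hne, Real.dist_eq, sub_sub_cancel_left, abs_neg,
    abs_of_nonneg (by unfold planarProb; positivity), planarProb, div_lt_iff₀ htotal]
  rw [div_lt_iff₀ hε] at hk
  refine lt_of_mul_lt_mul_left (a := (k : ℝ)) ?_ hkpos.le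
  calc (k : ℝ) * {G ∈ planarSet n (m n) | ¬ P n G}.ncard
      ≤ C * (planarSet n (m n)).ncard := by exact_mod_cast hbad
    _ < (k * ε) * (planarSet n (m n)).ncard := by gcongr
    _ = k * (ε * (planarSet n (m n)).ncard) := mul_assoc _ _ _

lemma eventually_isSparse {m : ℕ → ℕ} (k : ℕ)
    (hmu : ∀ ε : ℝ, 0 < ε → ∀ᶠ n : ℕ in atTop, (m n : ℝ) ≤ (1 + ε) * n) :
    ∀ᶠ n in atTop, IsSparse k n (m n) := by
  set D := 8 * (2 * k + 5)
  have hD : (0 : ℝ) < D := by simp only [D]; positivity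
  filter_upwards [hmu (1 / D) (by positivity), eventually_ge_atTop (24 * k * (2 * k + 5))]
    with n hn hnk
  refine ⟨hnk, ?_⟩
  have : (D : ℝ) * m n ≤ (D + 1) * n := calc
    (D : ℝ) * m n ≤ D * ((1 + 1 / D) * n) := by gcongr
    _ = (D + 1) * n := by field_simp
  exact_mod_cast this

lemma exists_eventually_le_mul {c : ℝ} {m : ℕ → ℕ} (h : ℕ) (hc : 0 < c)
    (hml : ∀ᶠ n : ℕ in atTop, c * (n : ℝ) ≤ (m n : ℝ)) :
    ∃ q, ∀ᶠ n in atTop, ∃ e, m n = e + h ∧ n ≤ q * (e + 1) := by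
  obtain ⟨q, hq⟩ := exists_nat_ge (2 / c)
  obtain ⟨n₀, hn₀⟩ := exists_nat_ge (2 * h / c)
  refine ⟨q, ?_⟩
  filter_upwards [hml, eventually_ge_atTop n₀] with n hm hn
  have hch : 2 * (h : ℝ) ≤ c * n := by
    rw [mul_comm c, ← div_le_iff₀ hc]
    exact hn₀.trans (by exact_mod_cast hn)
  have hhm : h ≤ m n := by
    have : (h : ℝ) ≤ m n := by linarith [h.cast_nonneg (α := ℝ)]
    exact_mod_cast this
  obtain ⟨e, he⟩ := Nat.exists_eq_add_of_le' hhm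
  refine ⟨e, he, ?_⟩
  have hce : c * n ≤ 2 * (e + 1) := by
    rw [he] at hm
    push_cast at hm
    linarith
  have : (n : ℝ) ≤ q * (e + 1) := calc
    (n : ℝ) ≤ 2 * (e + 1) / c := by rwa [le_div_iff₀' hc]
    _ = 2 / c * (e + 1) := by ring
    _ ≤ q * (e + 1) := by gcongr
  exact_mod_cast this

end Limit

end PlanarTreeComponents

theorem tree_components_whp (h : ℕ) (H : SimpleGraph (Fin h)) (hH : H.IsTree)
    (t : ℕ) (ht : 0 < t) (c : ℝ) (hc : 0 < c) (m : ℕ → ℕ)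
    (hml : ∀ᶠ n : ℕ in atTop, c * (n : ℝ) ≤ (m n : ℝ))
    (hmu : ∀ ε : ℝ, 0 < ε → ∀ᶠ n : ℕ in atTop, (m n : ℝ) ≤ (1 + ε) * n) :
    Tendsto (fun n : ℕ => planarProb n (m n) fun G => t ≤ numOrderComponents H G)
      atTop (nhds 1) := by
  open PlanarTreeComponents in
  obtain ⟨q, hq⟩ := exists_eventually_le_mul h hc hml
  refine tendsto_planarProb_one ((10 * (q + 13) * h) ^ h * (t + 6 * h) * 2) ?_ fun k => ?_
  · filter_upwards [eventually_isSparse 1 hmu] with n hsparse using hsparse.planarSet_nonempty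
  · filter_upwards [hq, eventually_isSparse (k + h + 1) hmu] with n ⟨e, hm, hne⟩ hsparse
    rw [hm] at hsparse ⊢
    exact mul_ncard_planarSet_lt_le hH hsparse hne
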